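/- arXiv:2207.14102 — 11 statements merged into one kernel-verified Lean document; each statement's English description precedes it below -/
import Mathlib

section
/- Let n ≥ 3. If ω is the explicitly defined permutation (ω(j) = 2j−1 on the first half and even values on the second half), and ω = ρ_1 ρ_2 ⋯ ρ_l where each ρ_i is one of σ, τ, τ⁻¹, then l ≥ (n² − 2n − 7)/4. In other words, the quantum complexity of ω is at least (n² − 2n − 7)/4. -/
/-!
Write `‖x‖` for the distance from `x : ZMod n` to `0` around the circle, and for a permutation `π`
and `r : ZMod n` put `Ψ(π, r) = ∑ i, ‖π i - i - r‖`, the total displacement of `π` relative to the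
rotation by `r`. Multiplying `π` on the left by `τ^{±1}` leaves `Ψ` unchanged if `r` is shifted
by `±1` (`displacement_rotate`, `displacement_rotate_inv`), and multiplying by `σ` moves two points
by one step each, so it raises `Ψ` by at most `2` (`displacement_sigma`). Two consecutive `σ`
cancel, so in a shortest word a `τ^{±1}` stands between any two `σ`. A word of length `l` therefore
has product `π` with `Ψ(π, r) ≤ l + 1` for some `r` (`displacement_le_length`).

On the other side, modulo `n` one has `ω i - i = i` for all `i` when `n = 2m + 1`, so the
displacements run through every residue once and `Ψ(ω, r) = ∑ z, ‖z‖ = m (m + 1)` for every `r`.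
When `n = 2m`, they are `0, …, m - 1, m + 1, …, 2m`: every residue except that `m` is replaced by a
second `0`. Since `∑ z, ‖z‖ = m²` and `‖m - r‖ ≤ ‖r‖ + m`, again `Ψ(ω, r) ≥ m² - m` for every `r`.
-/

/-- The transposition `σ ∈ S_n` swapping the elements `1` and `2` of `{1, …, n}`
(represented 0-indexed by `Fin n`, so it swaps the indices `0` and `1`). -/
def sigmaGen (n : ℕ) : Equiv.Perm (Fin n) :=
  if h : 2 ≤ n then Equiv.swap ⟨0, by omega⟩ ⟨1, by omega⟩ else 1

/-- The generating set `{σ, τ, τ⁻¹}`, where `τ = finRotate n` is the cyclic permutation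
sending `k` to `k+1` for `1 ≤ k ≤ n-1` and `n` to `1`. -/
def gates (n : ℕ) : Set (Equiv.Perm (Fin n)) :=
  {sigmaGen n, finRotate n, (finRotate n)⁻¹}

/-- `ω` is the explicitly defined permutation of `{1, …, n}`: if `n` is odd then
`ω(j) = 2j - 1` for `1 ≤ j ≤ (n+1)/2` and `ω((n+1)/2 + j) = 2j` for `1 ≤ j ≤ (n-1)/2`;
if `n` is even then `ω(j) = 2j - 1` for `1 ≤ j ≤ n/2` and `ω(n/2 + j) = 2j` for
`1 ≤ j ≤ n/2`.  Here the element `x ∈ {1, …, n}` is represented by `x - 1 : Fin n`,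
so the 1-indexed position of `j : Fin n` is `(j : ℕ) + 1` and the 1-indexed value of
`ω j` is `(ω j : ℕ) + 1`. -/
def wSpec (n : ℕ) (ω : Equiv.Perm (Fin n)) : Prop :=
  (Odd n →
    (∀ j : Fin n, (j : ℕ) + 1 ≤ (n + 1) / 2 →
      ((ω j : ℕ) + 1) = 2 * ((j : ℕ) + 1) - 1) ∧
    (∀ j : Fin n, (n + 1) / 2 < (j : ℕ) + 1 →
      ((ω j : ℕ) + 1) = 2 * ((j : ℕ) + 1 - (n + 1) / 2))) ∧
  (Even n →
    (∀ j : Fin n, (j : ℕ) + 1 ≤ n / 2 →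
      ((ω j : ℕ) + 1) = 2 * ((j : ℕ) + 1) - 1) ∧
    (∀ j : Fin n, n / 2 < (j : ℕ) + 1 →
      ((ω j : ℕ) + 1) = 2 * ((j : ℕ) + 1 - n / 2)))

/-- The distance from `x` to `0` around the cycle `ZMod n`. -/
def circNorm {n : ℕ} (x : ZMod n) : ℕ := x.valMinAbs.natAbs

/-- The total displacement of `π` relative to the rotation by `r`. -/
def displacement {n : ℕ} (π : Equiv.Perm (Fin n)) (r : ZMod n) : ℕ :=
  ∑ i : Fin n, circNorm ((((π i : ℕ) : ZMod n) - ((i : ℕ) : ZMod n)) - r)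

lemma circNorm_add_le {n : ℕ} (x y : ZMod n) :
    circNorm (x + y) ≤ circNorm x + circNorm y :=
  (ZMod.natAbs_valMinAbs_add_le x y).trans (Int.natAbs_add_le _ _)

lemma circNorm_neg {n : ℕ} (x : ZMod n) : circNorm (-x) = circNorm x :=
  ZMod.natAbs_valMinAbs_neg x

lemma circNorm_natCast {n a : ℕ} [NeZero n] (ha : a < n) :
    circNorm (a : ZMod n) = min a (n - a) := by
  rw [circNorm, ZMod.valMinAbs_natAbs_eq_min, ZMod.val_natCast_of_lt ha]

lemma circNorm_one_le {n : ℕ} (hn : 3 ≤ n) : circNorm (1 : ZMod n) ≤ 1 := by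
  have : NeZero n := ⟨by omega⟩
  have h := circNorm_natCast (n := n) (a := 1) (by omega)
  rw [Nat.cast_one] at h
  omega

lemma finRotate_cast {n : ℕ} (hn : 3 ≤ n) (i : Fin n) :
    ((finRotate n i : ℕ) : ZMod n) = ((i : ℕ) : ZMod n) + 1 := by
  obtain ⟨k, rfl⟩ : ∃ k, n = k + 1 := ⟨n - 1, by omega⟩
  rw [finRotate_apply, Fin.val_add, ZMod.natCast_mod, Nat.cast_add, Fin.val_one',
    ZMod.natCast_mod, Nat.cast_one]

lemma displacement_rotate {n : ℕ} (hn : 3 ≤ n) (π : Equiv.Perm (Fin n)) (r : ZMod n) :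
    displacement (finRotate n * π) (r + 1) = displacement π r := by
  refine Finset.sum_congr rfl fun i _ => ?_
  rw [Equiv.Perm.mul_apply, finRotate_cast hn]
  congr 1
  ring

lemma displacement_rotate_inv {n : ℕ} (hn : 3 ≤ n) (π : Equiv.Perm (Fin n)) (r : ZMod n) :
    displacement ((finRotate n)⁻¹ * π) (r - 1) = displacement π r := by
  rw [← displacement_rotate hn, sub_add_cancel, mul_inv_cancel_left]

lemma displacement_sigma {n : ℕ} (hn : 3 ≤ n) (π : Equiv.Perm (Fin n)) (r : ZMod n) :
    displacement (sigmaGen n * π) r ≤ displacement π r + 2 := by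
  set a : Fin n := ⟨0, by omega⟩ with ha
  set b : Fin n := ⟨1, by omega⟩ with hb
  have hσ : sigmaGen n = Equiv.swap a b := by
    rw [sigmaGen, dif_pos (by omega : 2 ≤ n)]
  have hsum : ∀ c : Fin n, (∑ i, if π i = c then 1 else 0) = 1 := fun c => by
    rw [Equiv.sum_comp π fun j => if j = c then 1 else 0]
    simp
  have key : ∀ i, circNorm ((((sigmaGen n * π) i : ℕ) : ZMod n) - ((i : ℕ) : ZMod n) - r) ≤
      circNorm (((π i : ℕ) : ZMod n) - ((i : ℕ) : ZMod n) - r) +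
        ((if π i = a then 1 else 0) + (if π i = b then 1 else 0)) := fun i => by
    rw [Equiv.Perm.mul_apply, hσ]
    have h1 := circNorm_one_le hn
    by_cases h : π i = a
    · rw [h, Equiv.swap_apply_left, if_pos rfl]
      have h2 := circNorm_add_le (((a : ℕ) : ZMod n) - ((i : ℕ) : ZMod n) - r) 1
      have h3 : ((b : ℕ) : ZMod n) - ((i : ℕ) : ZMod n) - r =
          ((a : ℕ) : ZMod n) - ((i : ℕ) : ZMod n) - r + 1 := by
        simp only [ha, hb]; push_cast; ring
      rw [h3]
      omega
    · by_cases h' : π i = b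
      · rw [h', Equiv.swap_apply_right, if_pos (rfl : b = b)]
        have h2 := circNorm_add_le (((b : ℕ) : ZMod n) - ((i : ℕ) : ZMod n) - r) (-1)
        rw [circNorm_neg] at h2
        have h3 : ((a : ℕ) : ZMod n) - ((i : ℕ) : ZMod n) - r =
            ((b : ℕ) : ZMod n) - ((i : ℕ) : ZMod n) - r + -1 := by
          simp only [ha, hb]; push_cast; ring
        rw [h3]
        omega
      · rw [Equiv.swap_apply_of_ne_of_ne h h']
        omega
  calc displacement (sigmaGen n * π) r ≤ _ := Finset.sum_le_sum fun i _ => key i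
    _ = displacement π r + 2 := by
      rw [Finset.sum_add_distrib, Finset.sum_add_distrib, hsum, hsum, displacement]

lemma sigmaGen_mul_self (n : ℕ) : sigmaGen n * sigmaGen n = 1 := by
  unfold sigmaGen
  split_ifs <;> simp

/-- The second alternative covers words which, after cancelling `σσ`, begin with `σ`: there a
surplus of `1` over the length may arise, and the next letter either absorbs it (a rotation) or
cancels the `σ`. -/
lemma displacement_dichotomy {n : ℕ} (hn : 3 ≤ n) (L : List (Equiv.Perm (Fin n)))
    (hL : ∀ ρ ∈ L, ρ ∈ gates n) :
    (∃ r, displacement L.prod r ≤ L.length) ∨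
      ∃ π, L.prod = sigmaGen n * π ∧ ∃ r, displacement π r + 1 ≤ L.length := by
  induction L with
  | nil =>
    refine Or.inl ⟨0, ?_⟩
    simp [displacement, circNorm]
  | cons ρ L ih =>
    have ih := ih fun x hx => hL x (List.mem_cons_of_mem _ hx)
    have hρ : ρ = sigmaGen n ∨ ρ = finRotate n ∨ ρ = (finRotate n)⁻¹ := by
      simpa [gates] using hL ρ List.mem_cons_self
    rw [List.prod_cons, List.length_cons]
    -- In both cases, a rotation letter may be prepended when the displacement is at most one more
    -- than the length of the remaining word.
    have hslack : ∃ r, displacement L.prod r ≤ L.length + 1 := by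
      rcases ih with ⟨r, hr⟩ | ⟨π, hπ, r, hr⟩
      · exact ⟨r, by omega⟩
      · refine ⟨r, ?_⟩
        have := displacement_sigma hn π r
        rw [hπ]
        omega
    rcases hρ with rfl | rfl | rfl
    · rcases ih with ⟨r, hr⟩ | ⟨π, hπ, r, hr⟩
      · exact Or.inr ⟨L.prod, rfl, r, by omega⟩
      · refine Or.inl ⟨r, ?_⟩
        rw [hπ, ← mul_assoc, sigmaGen_mul_self, one_mul]
        omega
    · obtain ⟨r, hr⟩ := hslack
      exact Or.inl ⟨r + 1, by rwa [displacement_rotate hn]⟩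
    · obtain ⟨r, hr⟩ := hslack
      exact Or.inl ⟨r - 1, by rwa [displacement_rotate_inv hn]⟩

lemma displacement_le_length {n : ℕ} (hn : 3 ≤ n) (L : List (Equiv.Perm (Fin n)))
    (hL : ∀ ρ ∈ L, ρ ∈ gates n) : ∃ r, displacement L.prod r ≤ L.length + 1 := by
  rcases displacement_dichotomy hn L hL with ⟨r, hr⟩ | ⟨π, hπ, r, hr⟩
  · exact ⟨r, by omega⟩
  · refine ⟨r, ?_⟩
    have := displacement_sigma hn π r
    rw [hπ]
    omega

/-- Translation does not change the sum of `circNorm` over a full set of residues. -/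
lemma sum_circNorm_sub {n : ℕ} (hn : 3 ≤ n) (r : ZMod n) :
    ∑ i ∈ Finset.range n, circNorm ((i : ZMod n) - r) = ∑ i ∈ Finset.range n, min i (n - i) := by
  have : NeZero n := ⟨by omega⟩
  have hres : ∀ f : ZMod n → ℕ, ∑ i ∈ Finset.range n, f (i : ZMod n) = ∑ z, f z := fun f =>
    Finset.sum_bij' (fun i _ => (i : ZMod n)) (fun z _ => z.val)
      (fun _ _ => Finset.mem_univ _) (fun z _ => Finset.mem_range.2 z.val_lt)
      (fun i hi => ZMod.val_natCast_of_lt (Finset.mem_range.1 hi))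
      (fun z _ => ZMod.natCast_zmod_val z) (fun _ _ => rfl)
  rw [hres fun z => circNorm (z - r), show ∑ z, circNorm (z - r) = ∑ z, circNorm z from
    Equiv.sum_comp (Equiv.subRight r) circNorm, ← hres]
  exact Finset.sum_congr rfl fun i hi => circNorm_natCast (Finset.mem_range.1 hi)

lemma sum_min_even (m : ℕ) : ∑ i ∈ Finset.range (m + m), min i (m + m - i) = m * m := by
  have h1 : ∑ i ∈ Finset.range m, min i (m + m - i) = ∑ i ∈ Finset.range m, i :=
    Finset.sum_congr rfl fun i hi => by have := Finset.mem_range.1 hi; omega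
  have h2 : ∑ i ∈ Finset.range m, min (m + i) (m + m - (m + i)) = ∑ i ∈ Finset.range m, (m - i) :=
    Finset.sum_congr rfl fun i hi => by have := Finset.mem_range.1 hi; omega
  rw [Finset.sum_range_add, h1, h2, ← Finset.sum_add_distrib,
    Finset.sum_congr rfl (g := fun _ => m) fun i hi => by
      have := Finset.mem_range.1 hi; omega]
  simp

lemma sum_min_odd (m : ℕ) :
    ∑ i ∈ Finset.range (2 * m + 1), min i (2 * m + 1 - i) = m * (m + 1) := by
  have h1 : ∑ i ∈ Finset.range (m + 1), min i (2 * m + 1 - i) = ∑ i ∈ Finset.range (m + 1), i :=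
    Finset.sum_congr rfl fun i hi => by have := Finset.mem_range.1 hi; omega
  have h2 : ∑ i ∈ Finset.range m, min (m + 1 + i) (2 * m + 1 - (m + 1 + i)) =
      ∑ i ∈ Finset.range m, (m - i) :=
    Finset.sum_congr rfl fun i hi => by have := Finset.mem_range.1 hi; omega
  have h3 : ∑ i ∈ Finset.range m, i + ∑ i ∈ Finset.range m, (m - i) = m * m := by
    rw [← Finset.sum_add_distrib, Finset.sum_congr rfl (g := fun _ => m) fun i hi => by
      have := Finset.mem_range.1 hi; omega]
    simp
  rw [show Finset.range (2 * m + 1) = Finset.range (m + 1 + m) by congr 1; omega,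
    Finset.sum_range_add, h1, h2, Finset.sum_range_succ]
  linarith

lemma displacement_odd {m : ℕ} (hn : 3 ≤ 2 * m + 1) (ω : Equiv.Perm (Fin (2 * m + 1)))
    (hω : wSpec (2 * m + 1) ω) (r : ZMod (2 * m + 1)) : displacement ω r = m * (m + 1) := by
  obtain ⟨h1, h2⟩ := hω.1 ⟨m, rfl⟩
  rw [← sum_min_odd, ← sum_circNorm_sub hn r,
    ← Fin.sum_univ_eq_sum_range fun i : ℕ => circNorm ((i : ZMod (2 * m + 1)) - r)]
  refine Finset.sum_congr rfl fun i _ => ?_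
  congr 2
  rw [sub_eq_iff_eq_add, ← Nat.cast_add]
  rcases le_or_gt ((i : ℕ) + 1) ((2 * m + 1 + 1) / 2) with h | h
  · have := h1 i h
    congr 1
    omega
  · have := h2 i h
    have h3 : (i : ℕ) + i = ω i + (2 * m + 1) := by omega
    rw [h3, Nat.cast_add, ZMod.natCast_self, add_zero]

lemma displacement_even {m : ℕ} (hn : 3 ≤ m + m) (ω : Equiv.Perm (Fin (m + m)))
    (hω : wSpec (m + m) ω) (r : ZMod (m + m)) : m * m ≤ displacement ω r + m := by
  have : NeZero (m + m) := ⟨by omega⟩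
  obtain ⟨h1, h2⟩ := hω.2 ⟨m, rfl⟩
  set f : ℕ → ℕ := fun i => circNorm ((i : ZMod (m + m)) - r) with hf
  have hΨ : displacement ω r = ∑ i ∈ Finset.range (m + m), if i < m then f i else f (i + 1) := by
    rw [← Fin.sum_univ_eq_sum_range fun i : ℕ => if i < m then f i else f (i + 1)]
    refine Finset.sum_congr rfl fun i _ => ?_
    rcases le_or_gt ((i : ℕ) + 1) ((m + m) / 2) with h | h
    · have := h1 i h
      rw [if_pos (by omega)]
      have h3 : (ω i : ℕ) = i + i := by omega
      rw [h3]
      simp [hf]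
    · have := h2 i h
      rw [if_neg (by omega)]
      have h3 : (ω i : ℕ) + (m + m) = (i + 1) + i := by omega
      have h4 := congrArg (Nat.cast : ℕ → ZMod (m + m)) h3
      rw [Nat.cast_add, ZMod.natCast_self, add_zero] at h4
      rw [h4, Nat.cast_add (i + 1 : ℕ), add_sub_cancel_right]
  have hS : ∑ i ∈ Finset.range (m + m), f i = m * m := by
    rw [hf, sum_circNorm_sub hn, sum_min_even]
  have hA : ∑ i ∈ Finset.range m, (if i < m then f i else f (i + 1)) =
      ∑ i ∈ Finset.range m, f i :=
    Finset.sum_congr rfl fun i hi => if_pos (Finset.mem_range.1 hi)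
  have hB : ∑ i ∈ Finset.range m, (if m + i < m then f (m + i) else f (m + i + 1)) =
      ∑ i ∈ Finset.range m, f (m + (i + 1)) :=
    Finset.sum_congr rfl fun i _ => if_neg (by omega)
  rw [Finset.sum_range_add, hA, hB] at hΨ
  rw [Finset.sum_range_add] at hS
  have hT := (Finset.sum_range_succ (fun i => f (m + i)) m).symm.trans
    (Finset.sum_range_succ' (fun i => f (m + i)) m)
  have hm : f m ≤ f (m + m) + m := by
    have h := circNorm_add_le (((m + m : ℕ) : ZMod (m + m)) - r) (m : ZMod (m + m))
    rw [circNorm_natCast (n := m + m) (a := m) (by omega)] at h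
    have h' : ((m + m : ℕ) : ZMod (m + m)) - r + (m : ZMod (m + m)) = (m : ZMod (m + m)) - r := by
      rw [ZMod.natCast_self]
      ring
    rw [h'] at h
    exact h.trans (by simp only [hf]; omega)
  simp only [add_zero] at hT
  omega

/-- Theorem 1.1: the explicit permutation `ω` has quantum complexity at least
`(n² - 2n - 7)/4`: any factorization `ω = ρ_1 ⋯ ρ_l` with each
`ρ_i ∈ {σ, τ, τ⁻¹}` has `l ≥ (n² - 2n - 7)/4`. -/
theorem quadratic_lower_bound_explicit (n : ℕ) (hn : 3 ≤ n)
    (ω : Equiv.Perm (Fin n)) (hω : wSpec n ω)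
    (L : List (Equiv.Perm (Fin n))) (hL : ∀ ρ ∈ L, ρ ∈ gates n)
    (hprod : L.prod = ω) :
    ((n : ℝ) ^ 2 - 2 * n - 7) / 4 ≤ (L.length : ℝ) := by
  obtain ⟨r, hr⟩ := displacement_le_length hn L hL
  rw [hprod] at hr
  rcases Nat.even_or_odd n with ⟨m, rfl⟩ | ⟨m, rfl⟩
  · have h : m * m ≤ L.length + 1 + m := (displacement_even hn ω hω r).trans (by omega)
    have h' : (m : ℝ) * m ≤ L.length + 1 + m := by exact_mod_cast h
    push_cast
    linarith
  · rw [displacement_odd hn ω hω r] at hr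
    have h' : (m : ℝ) * (m + 1) ≤ L.length + 1 := by exact_mod_cast hr
    have h0 : (0 : ℝ) ≤ m := m.cast_nonneg
    push_cast
    linarith
end

section
/- For every n ≥ 1 and every permutation ω ∈ S_n, there is a factorization ω = ρ_1 ρ_2 ⋯ ρ_j with each ρ_i ∈ {σ, τ, τ⁻¹} and j ≤ 3(n−1)². In other words, every permutation in S_n has quantum complexity at most 3(n−1)². -/
theorem finRotate_apply_mk {n j : ℕ} (h : j + 1 < n) :
    finRotate n ⟨j, by omega⟩ = ⟨j + 1, h⟩ := by
  obtain _ | n := n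
  · omega
  · exact finRotate_of_lt (by omega)

theorem finRotate_pow_apply_mk {n j : ℕ} (k : ℕ) (h : j + k < n) :
    (finRotate n ^ k) ⟨j, by omega⟩ = ⟨j + k, h⟩ := by
  induction k with
  | zero => simp
  | succ k ih =>
    rw [pow_succ', Equiv.Perm.mul_apply, ih (by omega), finRotate_apply_mk (by omega)]
    rfl

theorem sigma_mul_rotate_apply_zero {n : ℕ} (h : 2 ≤ n) :
    (sigmaGen n * finRotate n) ⟨0, by omega⟩ = ⟨0, by omega⟩ := by
  rw [Equiv.Perm.mul_apply, finRotate_apply_mk (by omega), sigmaGen, dif_pos h]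
  exact Equiv.swap_apply_right _ _

theorem sigma_mul_rotate_apply_pos {n j : ℕ} (hj : 1 ≤ j) (h : j + 1 < n) :
    (sigmaGen n * finRotate n) ⟨j, by omega⟩ = ⟨j + 1, h⟩ := by
  rw [Equiv.Perm.mul_apply, finRotate_apply_mk h, sigmaGen, dif_pos (by omega)]
  apply Equiv.swap_apply_of_ne_of_ne <;> simp [Fin.ext_iff]; omega

theorem sigma_mul_rotate_pow_apply_zero {n : ℕ} (m : ℕ) (h : m + 1 ≤ n) :
    ((sigmaGen n * finRotate n) ^ m) ⟨0, by omega⟩ = ⟨0, by omega⟩ := by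
  induction m with
  | zero => simp
  | succ m ih =>
    rw [pow_succ', Equiv.Perm.mul_apply, ih (by omega), sigma_mul_rotate_apply_zero (by omega)]

theorem sigma_mul_rotate_pow_apply_pos {n j : ℕ} (m : ℕ) (hj : 1 ≤ j) (h : j + m < n) :
    ((sigmaGen n * finRotate n) ^ m) ⟨j, by omega⟩ = ⟨j + m, h⟩ := by
  induction m with
  | zero => simp
  | succ m ih =>
    rw [pow_succ', Equiv.Perm.mul_apply, ih (by omega),
      sigma_mul_rotate_apply_pos (by omega) (by omega)]
    rfl

/-- The word `τ^a (στ)^(k-a) τ^(-k)` sends `k` to `a` and fixes all larger indices. -/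
theorem exists_word_cycle {n a k : ℕ} (hak : a ≤ k) (hk : k < n) :
    ∃ L : List (Equiv.Perm (Fin n)), (∀ ρ ∈ L, ρ ∈ gates n) ∧ L.length ≤ 3 * k ∧
      L.prod ⟨k, hk⟩ = ⟨a, by omega⟩ ∧ ∀ i : Fin n, k < i.val → L.prod i = i := by
  refine ⟨List.replicate a (finRotate n) ++
    ((List.replicate (k - a) [sigmaGen n, finRotate n]).flatten ++
      List.replicate k (finRotate n)⁻¹), ?_, ?_, ?_⟩
  · intro ρ hρ
    simp only [List.mem_append, List.mem_replicate, List.mem_flatten] at hρ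
    simp only [gates, Set.mem_insert_iff, Set.mem_singleton_iff]
    rcases hρ with ⟨-, h⟩ | ⟨l, ⟨-, rfl⟩, h⟩ | ⟨-, h⟩
    · exact Or.inr (Or.inl h)
    · simp only [List.mem_cons, List.not_mem_nil, or_false] at h
      tauto
    · exact Or.inr (Or.inr h)
  · simp
    omega
  · have hprod : (List.replicate a (finRotate n) ++
        ((List.replicate (k - a) [sigmaGen n, finRotate n]).flatten ++
          List.replicate k (finRotate n)⁻¹)).prod =
        finRotate n ^ a * ((sigmaGen n * finRotate n) ^ (k - a) * (finRotate n ^ k)⁻¹) := by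
      simp [List.prod_flatten]
    -- `τ^(-k)` subtracts `k` from every index that is at least `k`
    have hinv : ∀ i (hi : i < n), k ≤ i →
        (finRotate n ^ k)⁻¹ ⟨i, hi⟩ = ⟨i - k, by omega⟩ := by
      intro i hi hki
      rw [Equiv.Perm.inv_eq_iff_eq, finRotate_pow_apply_mk k (by omega)]
      simp only [Fin.mk.injEq]
      omega
    rw [hprod]
    constructor
    · simp only [Equiv.Perm.mul_apply, hinv k hk le_rfl, Nat.sub_self]
      rw [sigma_mul_rotate_pow_apply_zero _ (by omega), finRotate_pow_apply_mk a (by omega)]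
      simp
    · rintro ⟨i, hi⟩ hki
      simp only at hki
      simp only [Equiv.Perm.mul_apply, hinv i hi hki.le]
      rw [sigma_mul_rotate_pow_apply_pos _ (by omega) (by omega),
        finRotate_pow_apply_mk a (by omega)]
      simp only [Fin.mk.injEq]
      omega

theorem exists_word_of_fixes_above {n : ℕ} (k : ℕ) (hk : k < n) (ω : Equiv.Perm (Fin n))
    (hω : ∀ i : Fin n, k < i.val → ω i = i) :
    ∃ L : List (Equiv.Perm (Fin n)), (∀ ρ ∈ L, ρ ∈ gates n) ∧ L.prod = ω ∧
      L.length ≤ k * (3 * (n - 1)) := by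
  -- otherwise `ω k` would be a fixed point other than `k`, against injectivity
  have hle : (ω ⟨k, hk⟩).val ≤ k := by
    by_contra! h
    have := congrArg Fin.val (ω.injective (hω _ h))
    simp only at this
    omega
  induction k generalizing ω with
  | zero =>
    refine ⟨[], by simp, ?_, by simp⟩
    ext ⟨i, hi⟩
    rcases Nat.eq_zero_or_pos i with rfl | hpos
    · simp only [List.prod_nil, Equiv.Perm.one_apply]
      omega
    · rw [hω ⟨i, hi⟩ hpos]
      simp
  | succ k ih =>
    obtain ⟨C, hC, hlen, hCk, hCi⟩ := exists_word_cycle hle hk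
    have hfix : ∀ i : Fin n, k < i.val → (C.prod⁻¹ * ω) i = i := by
      intro i hi
      rw [Equiv.Perm.mul_apply, Equiv.Perm.inv_eq_iff_eq]
      rcases Nat.lt_or_ge (k + 1) i.val with h | h
      · rw [hω i h, hCi i h]
      · obtain rfl : i = ⟨k + 1, hk⟩ := Fin.ext (by simp only; omega)
        rw [hCk]
    have hle' : ((C.prod⁻¹ * ω) ⟨k, by omega⟩).val ≤ k := by
      by_contra! h
      have := congrArg Fin.val ((C.prod⁻¹ * ω).injective (hfix _ h))
      simp only at this
      omega
    obtain ⟨L, hL, hprod, hLlen⟩ := ih (by omega) _ hfix hle'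
    refine ⟨C ++ L, ?_, ?_, ?_⟩
    · intro ρ hρ
      exact (List.mem_append.1 hρ).elim (hC ρ) (hL ρ)
    · rw [List.prod_append, hprod, mul_inv_cancel_left]
    · rw [List.length_append, add_mul]
      omega

/-- Theorem 1.2: every permutation `ω ∈ S_n` can be written as a product
`ω = ρ_1 ⋯ ρ_j` with each `ρ_i ∈ {σ, τ, τ⁻¹}` and `j ≤ 3(n-1)²`. -/
theorem quadratic_upper_bound (n : ℕ) (hn : 1 ≤ n) (ω : Equiv.Perm (Fin n)) :
    ∃ L : List (Equiv.Perm (Fin n)), (∀ ρ ∈ L, ρ ∈ gates n) ∧ L.prod = ω ∧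
      L.length ≤ 3 * (n - 1) ^ 2 := by
  obtain ⟨L, hL, hprod, hlen⟩ :=
    exists_word_of_fixes_above (n - 1) (by omega) ω (fun i hi => by omega)
  exact ⟨L, hL, hprod, hlen.trans_eq (by ring)⟩
end

section
/- Let β ∈ S_n be any permutation. If β = ρ_1 ρ_2 ⋯ ρ_m where each ρ_i is one of σ, τ, τ⁻¹, then m ≥ min{|k − β(k)|, n − |k − β(k)|} for every k ∈ {1,…,n}. -/
/-- The distance between `a` and `b` on the cycle with `n` vertices `0, …, n - 1`, meaningful
for `a, b < n`, where the truncated subtraction is the true one. -/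
def circDist (n a b : ℕ) : ℕ := min (Nat.dist a b) (n - Nat.dist a b)

theorem circDist_triangle {n a b c : ℕ} (ha : a < n) (hb : b < n) (hc : c < n) :
    circDist n a c ≤ circDist n a b + circDist n b c := by
  unfold circDist Nat.dist
  omega

theorem circDist_finRotate_le_one {n : ℕ} (x : Fin n) :
    circDist n x (finRotate n x) ≤ 1 := by
  obtain _ | n := n
  · exact x.elim0
  · unfold circDist Nat.dist
    rw [coe_finRotate]
    have hx := x.isLt
    split_ifs with h
    · subst h
      simp only [Fin.val_last]
      omega
    · omega

theorem circDist_comm (n a b : ℕ) : circDist n a b = circDist n b a := by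
  unfold circDist
  rw [Nat.dist_comm]

theorem circDist_gate_le_one {n : ℕ} {ρ : Equiv.Perm (Fin n)} (hρ : ρ ∈ gates n) (x : Fin n) :
    circDist n x (ρ x) ≤ 1 := by
  rcases hρ with rfl | rfl | rfl
  · unfold sigmaGen circDist Nat.dist
    split_ifs with h
    · rw [Equiv.swap_apply_def]
      split_ifs with h0 h1
      · subst h0
        simp
      · subst h1
        simp
      · omega
    · simp
  · exact circDist_finRotate_le_one x
  · rw [circDist_comm]
    have h := circDist_finRotate_le_one ((finRotate n)⁻¹ x)
    rwa [← Equiv.Perm.mul_apply, mul_inv_cancel, Equiv.Perm.one_apply] at h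

theorem circDist_prod_le_length {n : ℕ} (L : List (Equiv.Perm (Fin n)))
    (hL : ∀ ρ ∈ L, ρ ∈ gates n) (k : Fin n) : circDist n k (L.prod k) ≤ L.length := by
  induction L with
  | nil => simp [circDist]
  | cons ρ L ih =>
    have h1 := ih fun ρ' h => hL ρ' (List.mem_cons_of_mem _ h)
    have h2 := circDist_gate_le_one (hL ρ List.mem_cons_self) (L.prod k)
    have h3 := circDist_triangle k.isLt (L.prod k).isLt (ρ (L.prod k)).isLt
    rw [List.prod_cons, List.length_cons, Equiv.Perm.mul_apply]
    omega

/-- Theorem 2.3: if `β = ρ_1 ⋯ ρ_m` with each `ρ_i ∈ {σ, τ, τ⁻¹}`, then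
`m ≥ min {|k - β(k)|, n - |k - β(k)|}` for every `k ∈ {1, …, n}`.
The element `k ∈ {1, …, n}` is represented 0-indexed by `k : Fin n`, so `k`
stands for `(k : ℕ) + 1` and `β(k)` for `(β k : ℕ) + 1`. -/
theorem lower_bound_single_point (n : ℕ) (β : Equiv.Perm (Fin n))
    (L : List (Equiv.Perm (Fin n))) (hL : ∀ ρ ∈ L, ρ ∈ gates n)
    (hprod : L.prod = β) :
    ∀ k : Fin n,
      min (Nat.dist ((k : ℕ) + 1) ((β k : ℕ) + 1))
        (n - Nat.dist ((k : ℕ) + 1) ((β k : ℕ) + 1)) ≤ L.length := by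
  intro k
  subst hprod
  rw [Nat.dist_add_add_right]
  exact circDist_prod_le_length L hL k
end

section
/- Let n ≥ 4. If the transposition (1 ⌊n/2⌋) (swapping 1 and ⌊n/2⌋ and fixing all other elements) is written as a product ρ_1 ⋯ ρ_m with each ρ_i ∈ {σ, τ, τ⁻¹}, then m ≥ ⌊n/2⌋ − 1. In other words, this transposition has linear quantum complexity lower bound ⌊n/2⌋ − 1. -/
lemma exists_shift_finRotate (n : ℕ) (x : Fin n) :
    ∃ k : ℤ, ((finRotate n x : Fin n) : ℤ) = x + 1 + n * k := by
  rcases n with _ | m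
  · exact x.elim0
  · rw [finRotate_apply, Fin.val_add_one]
    split_ifs with h
    · refine ⟨-1, ?_⟩
      subst h
      simp
    · exact ⟨0, by simp⟩

/-- A gate displaces each point by at most `1`, modulo `n`. -/
lemma exists_shift_of_mem_gates {n : ℕ} {ρ : Equiv.Perm (Fin n)} (h : ρ ∈ gates n) (x : Fin n) :
    ∃ d k : ℤ, |d| ≤ 1 ∧ ((ρ x : Fin n) : ℤ) = x + d + n * k := by
  rcases h with rfl | rfl | rfl
  · refine ⟨((sigmaGen n x : Fin n) : ℤ) - x, 0, ?_, by ring⟩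
    unfold sigmaGen
    split_ifs with h2
    · rw [Equiv.swap_apply_def]
      split_ifs with h0 h1
      · simp [h0]
      · simp [h1]
      · simp
    · simp
  · obtain ⟨k, hk⟩ := exists_shift_finRotate n x
    exact ⟨1, k, by simp, hk⟩
  · obtain ⟨k, hk⟩ := exists_shift_finRotate n ((finRotate n)⁻¹ x)
    rw [← Equiv.Perm.mul_apply, mul_inv_cancel, Equiv.Perm.one_apply] at hk
    exact ⟨-1, -k, by simp, by linarith⟩

/-- A word displaces each point by at most its length, modulo `n`. -/
lemma exists_shift_of_prod {n : ℕ} (L : List (Equiv.Perm (Fin n))) (hL : ∀ ρ ∈ L, ρ ∈ gates n)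
    (x : Fin n) :
    ∃ d k : ℤ, |d| ≤ L.length ∧ ((L.prod x : Fin n) : ℤ) = x + d + n * k := by
  induction L with
  | nil => exact ⟨0, 0, by simp, by simp⟩
  | cons ρ L ih =>
    obtain ⟨d, k, hd, h⟩ := ih fun ρ' hρ' => hL ρ' (List.mem_cons_of_mem _ hρ')
    obtain ⟨d', k', hd', h'⟩ := exists_shift_of_mem_gates (hL ρ List.mem_cons_self) (L.prod x)
    refine ⟨d + d', k + k', ?_, ?_⟩
    · have := abs_add_le d d'
      push_cast [List.length_cons]
      linarith
    · rw [List.prod_cons, Equiv.Perm.mul_apply, h', h]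
      ring

/-- The transposition `(1 ⌊n/2⌋)` (swapping the elements `1` and `⌊n/2⌋` of
`{1, …, n}`, 0-indexed these are `0` and `⌊n/2⌋ - 1`) has linear quantum complexity
lower bound: any factorization into gates from `{σ, τ, τ⁻¹}` has length at least
`⌊n/2⌋ - 1`. -/
theorem transposition_linear_lower_bound (n : ℕ) (hn : 4 ≤ n)
    (L : List (Equiv.Perm (Fin n))) (hL : ∀ ρ ∈ L, ρ ∈ gates n)
    (hprod : L.prod = Equiv.swap (⟨0, by omega⟩ : Fin n) ⟨n / 2 - 1, by omega⟩) :
    n / 2 - 1 ≤ L.length := by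
  obtain ⟨d, k, hd, h⟩ := exists_shift_of_prod L hL ⟨0, by omega⟩
  rw [hprod, Equiv.swap_apply_left] at h
  simp only [Nat.cast_zero, zero_add] at h
  rw [abs_le] at hd
  -- The number of turns `k` around the cycle decides the case: none gives `d = n / 2 - 1`,
  -- a nonzero number makes `|d|` at least `n - (n / 2 - 1)`.
  rcases lt_trichotomy k 0 with hk | rfl | hk
  · have : (n : ℤ) * k ≤ -n := by nlinarith
    omega
  · simp only [mul_zero, add_zero] at h
    omega
  · have : (n : ℤ) ≤ n * k := by nlinarith
    omega
end

section
/- Let ω ∈ S_n. If ω = ρ_1 ρ_2 ⋯ ρ_t where each ρ_j is one of σ, τ, τ⁻¹, then there exist an integer k and adjacent transpositions s_1, …, s_i such that τ^k ω = s_i ⋯ s_1 and t ≥ 2i − 1. -/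
/-- `s` is an adjacent transposition: a transposition `(l, l+1)` with `1 ≤ l ≤ n-1`,
or the transposition `(n, 1)`.  In the 0-indexed representation by `Fin n` these are
exactly the transpositions `(i, (i+1) mod n)` for `i : Fin n`. -/
def IsAdjacentTransposition (n : ℕ) (s : Equiv.Perm (Fin n)) : Prop :=
  ∃ l : Fin n, s = Equiv.swap l ⟨((l : ℕ) + 1) % n, Nat.mod_lt _ l.pos⟩

/-- Some left translate of `ω` by a power of `τ` is a product of at most `m` adjacent
transpositions. -/
def RotReducible (n : ℕ) (ω : Equiv.Perm (Fin n)) (m : ℕ) : Prop :=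
  ∃ (k : ℤ) (M : List (Equiv.Perm (Fin n))),
    (∀ s ∈ M, IsAdjacentTransposition n s) ∧ (finRotate n) ^ k * ω = M.prod ∧ M.length ≤ m

lemma adjacent_iff (n : ℕ) (s : Equiv.Perm (Fin n)) :
    IsAdjacentTransposition n s ↔ ∃ l : Fin n, s = Equiv.swap l (finRotate n l) := by
  have h : ∀ l : Fin n, (⟨((l : ℕ) + 1) % n, Nat.mod_lt _ l.pos⟩ : Fin n) = finRotate n l := by
    intro l
    cases n with
    | zero => exact l.elim0
    | succ m =>
      rw [finRotate_apply]
      ext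
      simp [Fin.val_add]
  simp only [IsAdjacentTransposition, h]

lemma adjacent_conj {n : ℕ} {s : Equiv.Perm (Fin n)} (hs : IsAdjacentTransposition n s) (k : ℤ) :
    IsAdjacentTransposition n ((finRotate n) ^ k * s * ((finRotate n) ^ k)⁻¹) := by
  rw [adjacent_iff] at hs ⊢
  obtain ⟨l, rfl⟩ := hs
  refine ⟨((finRotate n) ^ k) l, ?_⟩
  have hc : finRotate n (((finRotate n) ^ k) l) = ((finRotate n) ^ k) (finRotate n l) := by
    rw [← Equiv.Perm.mul_apply, ← Equiv.Perm.mul_apply,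
      ((Commute.refl (finRotate n)).zpow_right k).eq]
  rw [hc, Equiv.swap_apply_apply]

lemma sigmaGen_adjacent {n : ℕ} (h : 2 ≤ n) : IsAdjacentTransposition n (sigmaGen n) := by
  refine ⟨⟨0, by omega⟩, ?_⟩
  simp [sigmaGen, h, Nat.mod_eq_of_lt (show 1 < n by omega)]

namespace RotReducible

variable {n : ℕ} {ω : Equiv.Perm (Fin n)} {m : ℕ}

lemma mono (h : RotReducible n ω m) {m' : ℕ} (hm : m ≤ m') : RotReducible n ω m' := by
  obtain ⟨k, M, hM, hk, hl⟩ := h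
  exact ⟨k, M, hM, hk, hl.trans hm⟩

lemma zpow_mul (h : RotReducible n ω m) (j : ℤ) : RotReducible n ((finRotate n) ^ j * ω) m := by
  obtain ⟨k, M, hM, hk, hl⟩ := h
  refine ⟨k - j, M, hM, ?_, hl⟩
  rw [← hk, ← mul_assoc, ← zpow_add, sub_add_cancel]

lemma sigma_mul (h : RotReducible n ω m) : RotReducible n (sigmaGen n * ω) (m + 1) := by
  by_cases hn : 2 ≤ n
  · obtain ⟨k, M, hM, hk, hl⟩ := h
    refine ⟨k, ((finRotate n) ^ k * sigmaGen n * ((finRotate n) ^ k)⁻¹) :: M, ?_, ?_, by simpa⟩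
    · simpa using ⟨adjacent_conj (sigmaGen_adjacent hn) k, hM⟩
    · rw [List.prod_cons, ← hk]
      group
  · simpa [sigmaGen, hn] using h.mono (Nat.le_succ m)

/-- A gate other than `σ` is a power of `τ`, so it costs no transposition. -/
lemma gate_mul (h : RotReducible n ω m) {ρ : Equiv.Perm (Fin n)} (hρ : ρ ∈ gates n) :
    ρ = sigmaGen n ∨ RotReducible n (ρ * ω) m := by
  rcases hρ with rfl | rfl | rfl
  · exact Or.inl rfl
  · exact Or.inr (by simpa using h.zpow_mul 1)
  · exact Or.inr (by simpa using h.zpow_mul (-1))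

lemma gate_mul_succ (h : RotReducible n ω m) {ρ : Equiv.Perm (Fin n)} (hρ : ρ ∈ gates n) :
    RotReducible n (ρ * ω) (m + 1) := by
  rcases h.gate_mul hρ with rfl | h'
  · exact h.sigma_mul
  · exact h'.mono (Nat.le_succ m)

/-- The number `(t + 1) / 2` is the count of blocks when `t` letters are cut into pairs. -/
lemma of_gates : ∀ L : List (Equiv.Perm (Fin n)), (∀ ρ ∈ L, ρ ∈ gates n) →
    RotReducible n L.prod ((L.length + 1) / 2)
  | [], _ => ⟨0, [], by simp⟩
  | [a], hL => by
    have h1 : RotReducible n 1 0 := ⟨0, [], by simp⟩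
    simpa using h1.gate_mul_succ (hL a (by simp))
  | a :: b :: L, hL => by
    have ih := of_gates L fun ρ hρ => hL ρ (by simp [hρ])
    have ha := hL a (by simp)
    have hb := hL b (by simp)
    have hlen : ((a :: b :: L).length + 1) / 2 = (L.length + 1) / 2 + 1 := by
      simp only [List.length_cons]
      omega
    rw [hlen, List.prod_cons, List.prod_cons]
    rcases ih.gate_mul hb with rfl | hb'
    · rcases ih.sigma_mul.gate_mul ha with rfl | ha'
      · rw [← mul_assoc, sigmaGen_mul_self, one_mul]
        exact ih.mono (Nat.le_succ _)
      · exact ha'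
    · exact hb'.gate_mul_succ ha

end RotReducible

/-- Lemma 3.2: if `ω = ρ_1 ⋯ ρ_t` with each `ρ_j ∈ {σ, τ, τ⁻¹}`, then there exist an
integer `k` and adjacent transpositions `s_1, …, s_i` with `τ^k ω = s_i ⋯ s_1` and
`t ≥ 2i - 1`. -/
theorem reduce_to_adjacent_transpositions (n : ℕ) (ω : Equiv.Perm (Fin n))
    (L : List (Equiv.Perm (Fin n))) (hL : ∀ ρ ∈ L, ρ ∈ gates n)
    (hprod : L.prod = ω) :
    ∃ (k : ℤ) (M : List (Equiv.Perm (Fin n))),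
      (∀ s ∈ M, IsAdjacentTransposition n s) ∧
      (finRotate n) ^ k * ω = M.prod ∧
      2 * (M.length : ℤ) - 1 ≤ (L.length : ℤ) := by
  subst hprod
  obtain ⟨k, M, hM, hk, hl⟩ := RotReducible.of_gates L hL
  exact ⟨k, M, hM, hk, by omega⟩
end

section
/- Let n ≥ 2 and let l be an integer with 1 ≤ l ≤ n. Then the transposition (1 l) (swapping 1 and l and fixing all other elements) can be written as a product ρ_1 ⋯ ρ_m with each ρ_i ∈ {σ, τ, τ⁻¹} and m ≤ 2n − 3. -/
theorem sigmaGen_eq (m : ℕ) :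
    sigmaGen (m + 2) = Equiv.swap ⟨0, by omega⟩ ⟨1, by omega⟩ := by
  simp [sigmaGen]

theorem sigmaGen_apply_of_two_le (m k : ℕ) (hk : 2 ≤ k) (h : k < m + 2) :
    sigmaGen (m + 2) ⟨k, h⟩ = ⟨k, h⟩ := by
  rw [sigmaGen_eq]
  apply Equiv.swap_apply_of_ne_of_ne <;> simp only [ne_eq, Fin.mk.injEq] <;> omega

theorem sigmaGen_inv (m : ℕ) : (sigmaGen (m + 2))⁻¹ = sigmaGen (m + 2) := by
  rw [sigmaGen_eq, Equiv.swap_inv]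

theorem finRotate_inv_apply_succ (m k : ℕ) (h : k + 1 < m + 2) :
    (finRotate (m + 2))⁻¹ ⟨k + 1, h⟩ = ⟨k, by omega⟩ := by
  rw [Equiv.Perm.inv_eq_iff_eq, finRotate_of_lt (by omega)]

/-- Going up the circle: `(0 k)` is a product of `4 k - 3` generators, where `k = i + 1`. -/
theorem exists_list_up (m i : ℕ) (h : i + 1 < m + 2) :
    ∃ L : List (Equiv.Perm (Fin (m + 2))), (∀ ρ ∈ L, ρ ∈ gates (m + 2)) ∧
      L.prod = Equiv.swap ⟨0, by omega⟩ ⟨i + 1, h⟩ ∧ L.length = 4 * i + 1 := by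
  induction i with
  | zero => exact ⟨[sigmaGen (m + 2)], by simp [gates], by simp [sigmaGen_eq], rfl⟩
  | succ i ih =>
    obtain ⟨L, hL, hp, hlen⟩ := ih (by omega)
    refine ⟨[sigmaGen (m + 2), finRotate (m + 2)] ++ L ++
      [(finRotate (m + 2))⁻¹, sigmaGen (m + 2)], ?_, ?_, ?_⟩
    · intro ρ hρ
      simp only [List.mem_append, List.mem_cons, List.not_mem_nil, or_false] at hρ
      rcases hρ with ((rfl | rfl) | hρ) | (rfl | rfl)
      · simp [gates]
      · simp [gates]
      · exact hL ρ hρ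
      · simp [gates]
      · simp [gates]
    · have h0 : (sigmaGen (m + 2) * finRotate (m + 2)) ⟨0, by omega⟩ = ⟨0, by omega⟩ := by
        rw [Equiv.Perm.mul_apply, finRotate_of_lt (by omega), sigmaGen_eq]
        exact Equiv.swap_apply_right _ _
      have h1 : (sigmaGen (m + 2) * finRotate (m + 2)) ⟨i + 1, by omega⟩ =
          ⟨i + 1 + 1, h⟩ := by
        rw [Equiv.Perm.mul_apply, finRotate_of_lt (by omega),
          sigmaGen_apply_of_two_le _ _ (by omega)]
      have key := Equiv.swap_apply_apply (sigmaGen (m + 2) * finRotate (m + 2))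
        ⟨0, by omega⟩ ⟨i + 1, by omega⟩
      rw [h0, h1, mul_inv_rev, sigmaGen_inv] at key
      rw [key, ← hp]
      simp [mul_assoc]
    · simp only [List.length_append, List.length_cons, List.length_nil, hlen]
      omega

/-- Going down the circle: `(0 k)` is a product of `4 j - 1` generators, where `j = i + 1` and
`k + j = n = m + 2`. -/
theorem exists_list_down (m i k : ℕ) (hk : 1 ≤ k) (h : k + i = m + 1) :
    ∃ L : List (Equiv.Perm (Fin (m + 2))), (∀ ρ ∈ L, ρ ∈ gates (m + 2)) ∧
      L.prod = Equiv.swap ⟨0, by omega⟩ ⟨k, by omega⟩ ∧ L.length = 4 * i + 3 := by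
  induction i generalizing k with
  | zero =>
    obtain rfl : k = m + 1 := by omega
    refine ⟨[(finRotate (m + 2))⁻¹, sigmaGen (m + 2), finRotate (m + 2)], by simp [gates],
      ?_, rfl⟩
    have h0 : (finRotate (m + 2))⁻¹ ⟨0, by omega⟩ = ⟨m + 1, by omega⟩ := by
      rw [Equiv.Perm.inv_eq_iff_eq, finRotate_last']
    have key := Equiv.swap_apply_apply (finRotate (m + 2))⁻¹ ⟨0, by omega⟩ ⟨1, by omega⟩
    rw [h0, finRotate_inv_apply_succ m 0 (by omega), inv_inv, ← sigmaGen_eq] at key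
    rw [Equiv.swap_comm, key]
    simp [mul_assoc]
  | succ i ih =>
    obtain ⟨L, hL, hp, hlen⟩ := ih (k + 1) (by omega) (by omega)
    refine ⟨[(finRotate (m + 2))⁻¹, sigmaGen (m + 2)] ++ L ++
      [sigmaGen (m + 2), finRotate (m + 2)], ?_, ?_, ?_⟩
    · intro ρ hρ
      simp only [List.mem_append, List.mem_cons, List.not_mem_nil, or_false] at hρ
      rcases hρ with ((rfl | rfl) | hρ) | (rfl | rfl)
      · simp [gates]
      · simp [gates]
      · exact hL ρ hρ
      · simp [gates]
      · simp [gates]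
    · have h0 : ((finRotate (m + 2))⁻¹ * sigmaGen (m + 2)) ⟨0, by omega⟩ = ⟨0, by omega⟩ := by
        rw [Equiv.Perm.mul_apply, sigmaGen_eq, Equiv.swap_apply_left]
        exact finRotate_inv_apply_succ m 0 (by omega)
      have h1 : ((finRotate (m + 2))⁻¹ * sigmaGen (m + 2)) ⟨k + 1, by omega⟩ =
          ⟨k, by omega⟩ := by
        rw [Equiv.Perm.mul_apply, sigmaGen_apply_of_two_le _ _ (by omega),
          finRotate_inv_apply_succ]
      have key := Equiv.swap_apply_apply ((finRotate (m + 2))⁻¹ * sigmaGen (m + 2))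
        ⟨0, by omega⟩ ⟨k + 1, by omega⟩
      rw [h0, h1, mul_inv_rev, sigmaGen_inv, inv_inv] at key
      rw [key, ← hp]
      simp [mul_assoc]
    · simp only [List.length_append, List.length_cons, List.length_nil, hlen]
      omega

/-- Lemma 4.1: for `1 ≤ l ≤ n`, the transposition `(1 l)` (0-indexed: swapping the
indices `0` and `l - 1`) can be written as a product `ρ_1 ⋯ ρ_m` with each
`ρ_i ∈ {σ, τ, τ⁻¹}` and `m ≤ 2n - 3`. -/
theorem transposition_one_l_linear (n : ℕ) (hn : 2 ≤ n) (l : ℕ) (hl1 : 1 ≤ l)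
    (hl2 : l ≤ n) :
    ∃ L : List (Equiv.Perm (Fin n)), (∀ ρ ∈ L, ρ ∈ gates n) ∧
      L.prod = Equiv.swap (⟨0, by omega⟩ : Fin n) ⟨l - 1, by omega⟩ ∧
      L.length ≤ 2 * n - 3 := by
  obtain ⟨m, rfl⟩ : ∃ m, n = m + 2 := ⟨n - 2, by omega⟩
  obtain ⟨k, rfl⟩ : ∃ k, l = k + 1 := ⟨l - 1, by omega⟩
  simp only [Nat.add_sub_cancel]
  rcases k with _ | i
  · exact ⟨[], by simp, (Equiv.swap_self _).symm, by simp⟩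
  by_cases hi : 2 * (i + 1) ≤ m + 2
  · obtain ⟨L, hL, hp, hlen⟩ := exists_list_up m i (by omega)
    exact ⟨L, hL, hp, by omega⟩
  · obtain ⟨L, hL, hp, hlen⟩ := exists_list_down m (m - i) (i + 1) (by omega) (by omega)
    exact ⟨L, hL, hp, by omega⟩
end

section
/- Let n ≥ 2 and let l be an integer with 2 ≤ l ≤ n. Then the transposition (1 l) can be written as a product of at most min{4l − 7, 4(n − l) + 3} elements from the generating set {σ, τ, τ⁻¹}. -/
theorem sigmaGen_mem_gates (n : ℕ) : sigmaGen n ∈ gates n := by simp [gates]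

theorem finRotate_mem_gates (n : ℕ) : finRotate n ∈ gates n := by simp [gates]

theorem finRotate_inv_mem_gates (n : ℕ) : (finRotate n)⁻¹ ∈ gates n := by simp [gates]

theorem sigmaGen_eq_swap {n : ℕ} (hn : 2 ≤ n) :
    sigmaGen n = Equiv.swap ⟨0, by omega⟩ ⟨1, by omega⟩ := by
  simp [sigmaGen, hn]

theorem finRotate_mk {n k : ℕ} (h : k + 1 < n) :
    finRotate n ⟨k, by omega⟩ = ⟨k + 1, h⟩ := by
  obtain ⟨n, rfl⟩ : ∃ p, n = p + 1 := ⟨n - 1, by omega⟩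
  exact finRotate_of_lt (by omega)

theorem swap_zero_succ {n m : ℕ} (hm : 1 ≤ m) (h : m + 1 < n) :
    Equiv.swap (⟨0, by omega⟩ : Fin n) ⟨m + 1, h⟩ =
      sigmaGen n * finRotate n * Equiv.swap (⟨0, by omega⟩ : Fin n) ⟨m, by omega⟩ *
        (finRotate n)⁻¹ * sigmaGen n := by
  have hτ := Equiv.swap_apply_apply (finRotate n) ⟨0, by omega⟩ ⟨m, by omega⟩
  rw [finRotate_mk (by omega), finRotate_mk h] at hτ
  have hσ := Equiv.swap_apply_apply (sigmaGen n) ⟨1, by omega⟩ ⟨m + 1, h⟩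
  have h1 : sigmaGen n ⟨1, by omega⟩ = ⟨0, by omega⟩ := by
    rw [sigmaGen_eq_swap (by omega), Equiv.swap_apply_right]
  have h2 : sigmaGen n ⟨m + 1, h⟩ = ⟨m + 1, h⟩ := by
    rw [sigmaGen_eq_swap (by omega)]
    apply Equiv.swap_apply_of_ne_of_ne <;> simp [Fin.ext_iff]
    omega
  have h3 : (sigmaGen n)⁻¹ = sigmaGen n := by
    rw [sigmaGen_eq_swap (by omega), Equiv.swap_inv]
  rw [h1, h2, h3] at hσ
  rw [hσ]
  simp only [zero_add] at hτ
  rw [hτ]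
  simp only [mul_assoc]

/-- The inverse of the step in `swap_zero_succ`. -/
theorem swap_zero_pred {n m : ℕ} (hm : 1 ≤ m) (h : m + 1 < n) :
    Equiv.swap (⟨0, by omega⟩ : Fin n) ⟨m, by omega⟩ =
      (finRotate n)⁻¹ * sigmaGen n * Equiv.swap (⟨0, by omega⟩ : Fin n) ⟨m + 1, h⟩ *
        sigmaGen n * finRotate n := by
  have h3 : sigmaGen n * sigmaGen n = 1 := by
    rw [sigmaGen_eq_swap (by omega), Equiv.swap_mul_self]
  have h4 (x : Equiv.Perm (Fin n)) : sigmaGen n * (sigmaGen n * x) = x := by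
    rw [← mul_assoc, h3, one_mul]
  rw [swap_zero_succ hm h]
  simp [mul_assoc, h4]

theorem swap_zero_last {n : ℕ} (hn : 2 ≤ n) :
    Equiv.swap (⟨0, by omega⟩ : Fin n) ⟨n - 1, by omega⟩ =
      (finRotate n)⁻¹ * sigmaGen n * finRotate n := by
  have hτ := Equiv.swap_apply_apply (finRotate n) ⟨0, by omega⟩ ⟨n - 1, by omega⟩
  have hl : finRotate n ⟨n - 1, by omega⟩ = ⟨0, by omega⟩ := by
    obtain ⟨n, rfl⟩ : ∃ p, n = p + 1 := ⟨n - 1, by omega⟩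
    exact finRotate_last'
  rw [finRotate_mk (by omega), hl, Equiv.swap_comm] at hτ
  simp only [zero_add] at hτ
  rw [sigmaGen_eq_swap hn, hτ]
  simp [mul_assoc]

theorem exists_word_ascending {n : ℕ} (k : ℕ) (h : k + 1 < n) :
    ∃ L : List (Equiv.Perm (Fin n)), (∀ ρ ∈ L, ρ ∈ gates n) ∧
      L.prod = Equiv.swap (⟨0, by omega⟩ : Fin n) ⟨k + 1, h⟩ ∧ L.length = 4 * k + 1 := by
  induction k with
  | zero =>
    exact ⟨[sigmaGen n], by simp [sigmaGen_mem_gates],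
      by simp [sigmaGen_eq_swap (show 2 ≤ n by omega)], rfl⟩
  | succ k ih =>
    obtain ⟨L, hL, hp, hlen⟩ := ih (by omega)
    refine ⟨[sigmaGen n, finRotate n] ++ L ++ [(finRotate n)⁻¹, sigmaGen n], ?_, ?_, ?_⟩
    · have h1 := sigmaGen_mem_gates n
      have h2 := finRotate_mem_gates n
      have h3 := finRotate_inv_mem_gates n
      simp only [List.mem_append, List.mem_cons, List.not_mem_nil, or_false]
      rintro ρ (((rfl | rfl) | hρ) | (rfl | rfl)) <;> first | assumption | exact hL _ hρ
    · rw [swap_zero_succ (by omega) h, ← hp]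
      simp [mul_assoc]
    · simp [hlen]; omega

theorem exists_word_descending {n : ℕ} (k : ℕ) (h : k + 2 ≤ n) :
    ∃ L : List (Equiv.Perm (Fin n)), (∀ ρ ∈ L, ρ ∈ gates n) ∧
      L.prod = Equiv.swap (⟨0, by omega⟩ : Fin n) ⟨n - 1 - k, by omega⟩ ∧
      L.length = 4 * k + 3 := by
  have h1 := sigmaGen_mem_gates n
  have h2 := finRotate_mem_gates n
  have h3 := finRotate_inv_mem_gates n
  induction k with
  | zero =>
    refine ⟨[(finRotate n)⁻¹, sigmaGen n, finRotate n], ?_, ?_, rfl⟩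
    · simp [h1, h2, h3]
    · simp [swap_zero_last h, mul_assoc]
  | succ k ih =>
    obtain ⟨L, hL, hp, hlen⟩ := ih (by omega)
    refine ⟨[(finRotate n)⁻¹, sigmaGen n] ++ L ++ [sigmaGen n, finRotate n], ?_, ?_, ?_⟩
    · simp only [List.mem_append, List.mem_cons, List.not_mem_nil, or_false]
      rintro ρ (((rfl | rfl) | hρ) | (rfl | rfl)) <;> first | assumption | exact hL _ hρ
    · have e : n - 1 - k = n - 1 - (k + 1) + 1 := by omega
      simp only [e] at hp
      rw [swap_zero_pred (by omega) (by omega), ← hp]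
      simp [mul_assoc]
    · simp [hlen]; omega

/-- For `2 ≤ l ≤ n`, the transposition `(1 l)` (0-indexed: swapping the indices `0`
and `l - 1`) can be written as a product of at most `min {4l - 7, 4(n - l) + 3}`
elements from the generating set `{σ, τ, τ⁻¹}`. -/
theorem transposition_one_l_two_routes (n : ℕ) (hn : 2 ≤ n) (l : ℕ) (hl1 : 2 ≤ l)
    (hl2 : l ≤ n) :
    ∃ L : List (Equiv.Perm (Fin n)), (∀ ρ ∈ L, ρ ∈ gates n) ∧
      L.prod = Equiv.swap (⟨0, by omega⟩ : Fin n) ⟨l - 1, by omega⟩ ∧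
      L.length ≤ min (4 * l - 7) (4 * (n - l) + 3) := by
  rcases le_total (4 * l - 7) (4 * (n - l) + 3) with hle | hle
  · obtain ⟨L, hL, hp, hlen⟩ := exists_word_ascending (n := n) (l - 2) (by omega)
    refine ⟨L, hL, ?_, by omega⟩
    have e : l - 2 + 1 = l - 1 := by omega
    simpa only [e] using hp
  · obtain ⟨L, hL, hp, hlen⟩ := exists_word_descending (n := n) (n - l) (by omega)
    refine ⟨L, hL, ?_, by omega⟩
    have e : n - 1 - (n - l) = l - 1 := by omega
    simpa only [e] using hp
end

section
/- If a permutation ω ∈ S_n is very bumpy and ω = ρ_1 ρ_2 ⋯ ρ_l where each ρ_i is one of σ, τ, τ⁻¹, then l ≥ n²/32 − 3. In other words, every very bumpy permutation in S_n has quantum complexity at least n²/32 − 3. -/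
/-- The circle distance `d(x, y) = min {|x - y|, n - |x - y|}` on `{1, …, n}`. -/
def cdist (n x y : ℕ) : ℕ := min (Nat.dist x y) (n - Nat.dist x y)

/-- Definition 5.1: a permutation `ω` of `{1, …, n}` is very bumpy if for every
`k ∈ {0, 1, …, n-1}`, the number of indices `i ∈ {1, …, n}` with
`d(k + ω(i) (mod n), i) ≥ n/8` is at least `n/4`.  Here `i : Fin n` represents the
element `(i : ℕ) + 1`, and `k + ω(i) (mod n)` is the representative
`(k + (ω i : ℕ)) % n + 1 ∈ {1, …, n}` of `k + ω(i)` modulo `n`. -/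
def VeryBumpy (n : ℕ) (ω : Equiv.Perm (Fin n)) : Prop :=
  ∀ k : ℕ, k < n →
    (n : ℝ) / 4 ≤
      (Nat.card {i : Fin n //
        (n : ℝ) / 8 ≤ (cdist n ((k + (ω i : ℕ)) % n + 1) ((i : ℕ) + 1) : ℝ)} : ℝ)

/-- The total displacement `∑ i, d (m + ω i, i)` of `ω` shifted by `m`, with the representatives
modulo `n` used in `VeryBumpy`. -/
def totalDisp (n : ℕ) (ω : Equiv.Perm (Fin n)) (m : ℕ) : ℕ :=
  ∑ i : Fin n, cdist n ((m + (ω i : ℕ)) % n + 1) ((i : ℕ) + 1)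

/-- Some shift of `ω` has total displacement at most `B`. The shift is an arbitrary natural number,
as only its residue modulo `n` matters. -/
def ShiftBound (n : ℕ) (ω : Equiv.Perm (Fin n)) (B : ℕ) : Prop :=
  ∃ m, totalDisp n ω m ≤ B

lemma ShiftBound.mono {n : ℕ} {ω : Equiv.Perm (Fin n)} {B C : ℕ} (h : ShiftBound n ω B)
    (hBC : B ≤ C) : ShiftBound n ω C :=
  h.imp fun _ hm => hm.trans hBC

lemma cdist_succ_mod {n : ℕ} (hn : 2 ≤ n) (a y : ℕ) (hy : y < n) :
    cdist n ((a + 1) % n + 1) (y + 1) ≤ cdist n (a % n + 1) (y + 1) + 1 ∧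
      cdist n (a % n + 1) (y + 1) ≤ cdist n ((a + 1) % n + 1) (y + 1) + 1 := by
  have ha : a % n < n := Nat.mod_lt _ (by omega)
  have h1 : (a + 1) % n = if a % n + 1 = n then 0 else a % n + 1 := by
    rw [Nat.add_mod, Nat.mod_eq_of_lt (show 1 < n by omega)]
    split_ifs with h
    · rw [h, Nat.mod_self]
    · exact Nat.mod_eq_of_lt (by omega)
  rw [h1]
  generalize a % n = b at *
  unfold cdist Nat.dist
  split_ifs <;> omega

lemma totalDisp_sigmaGen_mul_le {n : ℕ} (hn : 2 ≤ n) (ω : Equiv.Perm (Fin n)) (m : ℕ) :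
    totalDisp n (sigmaGen n * ω) m ≤ totalDisp n ω m + 2 := by
  set p : Fin n := ⟨0, by omega⟩ with hp
  set q : Fin n := ⟨1, by omega⟩ with hq
  have hs : sigmaGen n = Equiv.swap p q := by simp [sigmaGen, hn, hp, hq]
  have key : ∀ i : Fin n, cdist n ((m + ((sigmaGen n * ω) i : ℕ)) % n + 1) ((i : ℕ) + 1) ≤
      cdist n ((m + (ω i : ℕ)) % n + 1) ((i : ℕ) + 1) +
        ((if ω i = p then 1 else 0) + if ω i = q then 1 else 0) := by
    intro i
    rw [Equiv.Perm.mul_apply, hs]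
    have h := cdist_succ_mod hn m i i.2
    by_cases h0 : ω i = p
    · rw [h0, Equiv.swap_apply_left]
      have : p ≠ q := by simp [hp, hq]
      simpa [this, hp, hq] using h.1
    · by_cases h1 : ω i = q
      · rw [h1, Equiv.swap_apply_right]
        have : q ≠ p := by simp [hp, hq]
        simpa [this, hp, hq] using h.2
      · rw [Equiv.swap_apply_of_ne_of_ne h0 h1]
        simp
  have hcount : ∀ r : Fin n, ∑ i : Fin n, (if ω i = r then 1 else 0) = 1 := by
    intro r
    rw [Equiv.sum_comp ω (fun j => if j = r then 1 else 0)]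
    simp
  calc totalDisp n (sigmaGen n * ω) m ≤ _ := Finset.sum_le_sum fun i _ => key i
    _ = totalDisp n ω m + 2 := by
      rw [Finset.sum_add_distrib, Finset.sum_add_distrib, hcount, hcount]
      rfl

lemma shiftBound_sigmaGen {n : ℕ} (hn : 2 ≤ n) {ω : Equiv.Perm (Fin n)} {B : ℕ}
    (h : ShiftBound n (sigmaGen n * ω) B) : ShiftBound n ω (B + 2) := by
  obtain ⟨m, hm⟩ := h
  refine ⟨m, ?_⟩
  have := totalDisp_sigmaGen_mul_le hn (sigmaGen n * ω) m
  rw [← mul_assoc, sigmaGen_mul_self, one_mul] at this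
  omega

lemma finRotate_val {n : ℕ} (hn : 2 ≤ n) (x : Fin n) :
    (finRotate n x : ℕ) = ((x : ℕ) + 1) % n := by
  obtain ⟨k, rfl⟩ : ∃ k, n = k + 2 := ⟨n - 2, by omega⟩
  rw [finRotate_apply, Fin.val_add]
  rfl

lemma shiftBound_finRotate {n : ℕ} (hn : 2 ≤ n) {ω : Equiv.Perm (Fin n)} {B : ℕ}
    (h : ShiftBound n ω B) : ShiftBound n (finRotate n * ω) B := by
  obtain ⟨m, hm⟩ := h
  refine ⟨m + (n - 1), le_of_eq_of_le (Finset.sum_congr rfl fun i _ => ?_) hm⟩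
  rw [Equiv.Perm.mul_apply, finRotate_val hn, Nat.add_mod_mod,
    show m + (n - 1) + ((ω i : ℕ) + 1) = m + (ω i : ℕ) + n by omega, Nat.add_mod_right]

lemma shiftBound_finRotate_inv {n : ℕ} (hn : 2 ≤ n) {ω : Equiv.Perm (Fin n)} {B : ℕ}
    (h : ShiftBound n ω B) : ShiftBound n ((finRotate n)⁻¹ * ω) B := by
  obtain ⟨m, hm⟩ := h
  refine ⟨m + 1, le_of_eq_of_le (Finset.sum_congr rfl fun i _ => ?_) hm⟩
  have h1 := finRotate_val hn (((finRotate n)⁻¹ * ω) i)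
  rw [← Equiv.Perm.mul_apply, mul_inv_cancel_left] at h1
  rw [h1, Nat.add_mod_mod, add_assoc, add_comm 1]

/-- The two alternatives record whether a factor `σ` at the front of the word is still to be
paid for. The second one says that deleting it leaves displacement at most `l - 1`. A further `σ`
in front cancels it, and a rotation in front supplies the missing unit of its cost `2`. -/
lemma shiftBound_word {n : ℕ} (hn : 2 ≤ n) (L : List (Equiv.Perm (Fin n)))
    (hL : ∀ ρ ∈ L, ρ ∈ gates n) :
    ShiftBound n L.prod L.length ∨
      ∃ B, B + 1 = L.length ∧ ShiftBound n (sigmaGen n * L.prod) B := by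
  induction L with
  | nil =>
    refine Or.inl ⟨0, le_of_eq (Finset.sum_eq_zero fun i _ => ?_)⟩
    simp [cdist, Nat.mod_eq_of_lt i.2]
  | cons ρ L ih =>
    have ih := ih fun ρ' h => hL ρ' (List.mem_cons_of_mem _ h)
    have hcost : ShiftBound n L.prod (L.length + 1) := by
      rcases ih with h | ⟨B, hB, h⟩
      · exact h.mono (by omega)
      · exact (shiftBound_sigmaGen hn h).mono (by omega)
    rw [List.prod_cons, List.length_cons]
    have hρ : ρ = sigmaGen n ∨ ρ = finRotate n ∨ ρ = (finRotate n)⁻¹ := hL ρ List.mem_cons_self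
    rcases hρ with rfl | rfl | rfl
    · rcases ih with h | ⟨B, hB, h⟩
      · refine Or.inr ⟨L.length, rfl, ?_⟩
        rwa [← mul_assoc, sigmaGen_mul_self, one_mul]
      · exact Or.inl (h.mono (by omega))
    · exact Or.inl (shiftBound_finRotate hn hcost)
    · exact Or.inl (shiftBound_finRotate_inv hn hcost)

lemma VeryBumpy.le_totalDisp {n : ℕ} (hn : 0 < n) {ω : Equiv.Perm (Fin n)}
    (hω : VeryBumpy n ω) (m : ℕ) : (n : ℝ) ^ 2 / 32 ≤ (totalDisp n ω m : ℝ) := by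
  classical
  have h := hω (m % n) (Nat.mod_lt _ hn)
  simp only [Nat.mod_add_mod] at h
  rw [Nat.card_eq_fintype_card, Fintype.card_subtype] at h
  set S := Finset.univ.filter fun i : Fin n =>
    (n : ℝ) / 8 ≤ (cdist n ((m + (ω i : ℕ)) % n + 1) ((i : ℕ) + 1) : ℝ) with hS
  calc (n : ℝ) ^ 2 / 32 = (n : ℝ) / 4 * ((n : ℝ) / 8) := by ring
    _ ≤ (S.card : ℝ) * ((n : ℝ) / 8) := by gcongr
    _ = ∑ i ∈ S, (n : ℝ) / 8 := by rw [Finset.sum_const, nsmul_eq_mul]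
    _ ≤ ∑ i ∈ S, (cdist n ((m + (ω i : ℕ)) % n + 1) ((i : ℕ) + 1) : ℝ) :=
      Finset.sum_le_sum fun i hi => (Finset.mem_filter.1 hi).2
    _ ≤ ∑ i, (cdist n ((m + (ω i : ℕ)) % n + 1) ((i : ℕ) + 1) : ℝ) :=
      Finset.sum_le_sum_of_subset_of_nonneg (Finset.subset_univ _) fun _ _ _ => Nat.cast_nonneg _
    _ = (totalDisp n ω m : ℝ) := by rw [totalDisp, Nat.cast_sum]

/-- Lemma 5.2: if `ω` is very bumpy and `ω = ρ_1 ⋯ ρ_l` with each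
`ρ_i ∈ {σ, τ, τ⁻¹}`, then `l ≥ n²/32 - 3`. -/
theorem very_bumpy_quadratic_lower_bound (n : ℕ) (ω : Equiv.Perm (Fin n))
    (hω : VeryBumpy n ω)
    (L : List (Equiv.Perm (Fin n))) (hL : ∀ ρ ∈ L, ρ ∈ gates n)
    (hprod : L.prod = ω) :
    (n : ℝ) ^ 2 / 32 - 3 ≤ (L.length : ℝ) := by
  have hl : (0 : ℝ) ≤ L.length := Nat.cast_nonneg _
  -- For `n ≤ 1` the left-hand side is negative.
  rcases Nat.lt_or_ge n 2 with hn | hn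
  · interval_cases n <;> norm_num <;> linarith
  have hbound : ShiftBound n ω (L.length + 1) := by
    rw [← hprod]
    rcases shiftBound_word hn L hL with h | ⟨B, hB, h⟩
    · exact h.mono (by omega)
    · exact (shiftBound_sigmaGen hn h).mono (by omega)
  obtain ⟨m, hm⟩ := hbound
  have h1 := hω.le_totalDisp (by omega) m
  have h2 : (totalDisp n ω m : ℝ) ≤ L.length + 1 := by exact_mod_cast hm
  linarith
end

section
/- For every n ≥ 8, the explicitly defined permutation ω is very bumpy: for every k ∈ {0, 1, …, n−1}, the number of indices i ∈ {1,…,n} with d(k + ω(i) (mod n), i) ≥ n/8 is at least n/4. -/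
/-- The form of `ω` on `{0, …, n-1}`, without division or a parity case distinction. -/
lemma wSpec.cases {n : ℕ} {ω : Equiv.Perm (Fin n)} (hω : wSpec n ω) (i : Fin n) :
    (ω i : ℕ) = 2 * (i : ℕ) ∨ (ω i : ℕ) + n = 2 * (i : ℕ) ∨
      (ω i : ℕ) + n = 2 * (i : ℕ) + 1 := by
  have hi := i.isLt
  rcases Nat.even_or_odd n with h | h
  · obtain ⟨h1, h2⟩ := hω.2 h
    have h1 := h1 i
    have h2 := h2 i
    obtain ⟨m, rfl⟩ := h
    omega
  · obtain ⟨h1, h2⟩ := hω.1 h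
    have h1 := h1 i
    have h2 := h2 i
    obtain ⟨m, rfl⟩ := h
    omega

/-- An index `i` counts towards very bumpiness as soon as the residue `r` of `k + i` satisfies
`n / 8 ≤ r` and `r + 1 ≤ 7 n / 8`. -/
lemma cdist_ge_of_residue {n k r i w : ℕ} (hk : k < n) (hi : i < n) (hw : w < n)
    (hr : k + i = r ∨ k + i = r + n) (hr1 : n ≤ 8 * r) (hr2 : 8 * (r + 1) ≤ 7 * n)
    (h : w = 2 * i ∨ w + n = 2 * i ∨ w + n = 2 * i + 1) :
    n ≤ 8 * cdist n ((k + w) % n + 1) (i + 1) := by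
  have hm : (k + w) % n = k + w ∧ k + w < n ∨ (k + w) % n + n = k + w ∧ (k + w) % n < n := by
    rcases Nat.lt_or_ge (k + w) n with h | h
    · exact Or.inl ⟨Nat.mod_eq_of_lt h, h⟩
    · right
      rw [Nat.mod_eq_sub_mod h, Nat.mod_eq_of_lt (by omega)]
      omega
  unfold cdist Nat.dist
  generalize (k + w) % n = x at hm ⊢
  omega

/-- For every `n ≥ 8`, the explicitly defined permutation `ω` is very bumpy. -/
theorem explicit_permutation_very_bumpy (n : ℕ) (hn : 8 ≤ n)
    (ω : Equiv.Perm (Fin n)) (hω : wSpec n ω) : VeryBumpy n ω := by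
  intro k hk
  -- `g s` is the index `i` for which `k + i` has residue `⌈n/8⌉ + s`.
  let g : Fin (7 * n / 8 - (n + 7) / 8) → ℕ := fun s =>
    if k ≤ (n + 7) / 8 + s then (n + 7) / 8 + s - k else (n + 7) / 8 + s + n - k
  have hg : ∀ s, g s < n ∧
      (k + g s = (n + 7) / 8 + s ∨ k + g s = (n + 7) / 8 + s + n) := by
    intro s
    have := s.isLt
    simp only [g]
    split_ifs <;> omega
  have hgood : ∀ s, (n : ℝ) / 8 ≤
      (cdist n ((k + (ω ⟨g s, (hg s).1⟩ : ℕ)) % n + 1) (g s + 1) : ℝ) := by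
    intro s
    have := s.isLt
    have h := cdist_ge_of_residue hk (hg s).1 (ω ⟨g s, (hg s).1⟩).isLt (hg s).2
      (by omega) (by omega) (hω.cases ⟨g s, (hg s).1⟩)
    have h' : (n : ℝ) ≤ 8 * (cdist n ((k + (ω ⟨g s, (hg s).1⟩ : ℕ)) % n + 1) (g s + 1) : ℝ) := by
      exact_mod_cast h
    linarith
  have hcard := Nat.card_le_card_of_injective
    (fun s => (⟨⟨g s, (hg s).1⟩, hgood s⟩ : {i : Fin n //
        (n : ℝ) / 8 ≤ (cdist n ((k + (ω i : ℕ)) % n + 1) ((i : ℕ) + 1) : ℝ)})) (by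
      intro s t hst
      have e : g s = g t := congrArg (fun x => (x.1 : ℕ)) hst
      have h1 := (hg s).2
      have h2 := (hg t).2
      have := s.isLt
      have := t.isLt
      apply Fin.ext
      omega)
  rw [Nat.card_fin] at hcard
  have h4 : n ≤ 4 * (7 * n / 8 - (n + 7) / 8) := by omega
  have h5 := h4.trans (Nat.mul_le_mul_left 4 hcard)
  have h6 : (n : ℝ) ≤ 4 * (Nat.card {i : Fin n //
        (n : ℝ) / 8 ≤ (cdist n ((k + (ω i : ℕ)) % n + 1) ((i : ℕ) + 1) : ℝ)} : ℝ) := by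
    exact_mod_cast h5
  linarith
end

section
/- The proportion of very bumpy permutations in S_n, that is, (number of very bumpy ω ∈ S_n)/n!, tends to 1 as n → ∞. -/
/-- A uniformly random permutation carries a fixed injective tuple `f` to a uniformly random one: all
fibres of `ω ↦ ω ∘ f` are translates of each other. -/
lemma card_fibre_mul_card_embedding {n m : ℕ} (f g : Fin m ↪ Fin n) :
    Fintype.card {ω : Equiv.Perm (Fin n) // f.trans ω.toEmbedding = g}
      * Fintype.card (Fin m ↪ Fin n) = n.factorial := by
  classical
  have key : ∀ h : Fin m ↪ Fin n,
      Fintype.card {ω : Equiv.Perm (Fin n) // f.trans ω.toEmbedding = h}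
        = Fintype.card {ω : Equiv.Perm (Fin n) // f.trans ω.toEmbedding = g} := by
    intro h
    -- `σ` is a permutation with `σ ∘ g = h`
    obtain ⟨σ, hσ⟩ := (Equiv.Perm.isMultiplyPretransitive (Fin n) m).exists_smul_eq g h
    have hσ' : ∀ j, σ (g j) = h j := fun j => by
      rw [← hσ]; rfl
    refine Fintype.card_congr ((Equiv.mulLeft σ⁻¹).subtypeEquiv fun ω => ?_)
    simp only [DFunLike.ext_iff, Function.Embedding.trans_apply, Equiv.coe_toEmbedding,
      Equiv.coe_mulLeft, Equiv.Perm.mul_apply, Equiv.Perm.inv_eq_iff_eq, hσ']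
  have h1 := Fintype.card_congr
    (Equiv.sigmaFiberEquiv fun ω : Equiv.Perm (Fin n) => f.trans ω.toEmbedding)
  rw [Fintype.card_sigma, Finset.sum_congr rfl fun h _ => key h, Finset.sum_const,
    Finset.card_univ, Fintype.card_perm, Fintype.card_fin, smul_eq_mul] at h1
  rw [mul_comm, h1]

/-- For a fixed injective `m`-tuple `f`, the probability that every entry is related to its image is at
most `c ^ m` divided by the number of injective tuples. -/
lemma card_perm_on_tuple_le {n m c : ℕ} (R : Fin n → Fin n → Prop) [∀ i, DecidablePred (R i)]
    (hR : ∀ i, Fintype.card {y // R i y} ≤ c) (f : Fin m ↪ Fin n) :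
    Fintype.card {ω : Equiv.Perm (Fin n) // ∀ j, R (f j) (ω (f j))}
      * Fintype.card (Fin m ↪ Fin n) ≤ n.factorial * c ^ m := by
  classical
  have e : {ω : Equiv.Perm (Fin n) // ∀ j, R (f j) (ω (f j))} ≃
      Σ g : {g : Fin m ↪ Fin n // ∀ j, R (f j) (g j)},
        {ω : Equiv.Perm (Fin n) // f.trans ω.toEmbedding = g.1} :=
    { toFun := fun ω => ⟨⟨f.trans ω.1.toEmbedding, ω.2⟩, ⟨ω.1, rfl⟩⟩
      invFun := fun p => ⟨p.2.1, fun j => by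
        have h := p.1.2 j
        rw [← p.2.2] at h
        exact h⟩
      left_inv := fun ω => rfl
      right_inv := by
        rintro ⟨⟨g, hg⟩, ⟨ω, h⟩⟩
        dsimp only at h
        subst h
        rfl }
  have hg : Fintype.card {g : Fin m ↪ Fin n // ∀ j, R (f j) (g j)} ≤ c ^ m := by
    calc Fintype.card {g : Fin m ↪ Fin n // ∀ j, R (f j) (g j)}
        ≤ Fintype.card (∀ j : Fin m, {y // R (f j) y}) :=
          Fintype.card_le_of_injective (fun g j => ⟨g.1 j, g.2 j⟩) (by
            intro g g' h
            apply Subtype.ext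
            ext j
            have := congrFun h j
            simp only [Subtype.mk.injEq] at this
            rw [this])
      _ = ∏ j : Fin m, Fintype.card {y // R (f j) y} := Fintype.card_pi
      _ ≤ ∏ _j : Fin m, c := Finset.prod_le_prod' fun j _ => hR (f j)
      _ = c ^ m := by simp
  rw [Fintype.card_congr e, Fintype.card_sigma, Finset.sum_mul,
    Finset.sum_congr rfl fun g _ => card_fibre_mul_card_embedding f g.1, Finset.sum_const,
    Finset.card_univ, smul_eq_mul, mul_comm]
  exact Nat.mul_le_mul_left _ hg

/-- Markov's inequality for the `m`-th factorial moment of the number of indices `i` with `R i (ω i)`,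
where every `i` is related to at most `c` values. -/
lemma card_perm_mul_descFactorial_le {n c : ℕ} (R : Fin n → Fin n → Prop)
    [∀ i, DecidablePred (R i)] (hR : ∀ i, Fintype.card {y // R i y} ≤ c) (t m : ℕ) (hm : m ≤ n) :
    Fintype.card {ω : Equiv.Perm (Fin n) // t ≤ Fintype.card {i // R i (ω i)}}
      * t.descFactorial m ≤ n.factorial * c ^ m := by
  classical
  -- an injective tuple of indices satisfying `R` is an embedding into the set of these indices
  have emb : ∀ ω : Equiv.Perm (Fin n),
      Fintype.card {f : Fin m ↪ Fin n // ∀ j, R (f j) (ω (f j))}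
        = (Fintype.card {i // R i (ω i)}).descFactorial m := by
    intro ω
    have e : {f : Fin m ↪ Fin n // ∀ j, R (f j) (ω (f j))} ≃ (Fin m ↪ {i // R i (ω i)}) :=
      Equiv.codRestrict (Fin m) {i | R i (ω i)}
    rw [Fintype.card_congr e, Fintype.card_embedding_eq, Fintype.card_fin]
  have swap : ∑ ω : Equiv.Perm (Fin n), Fintype.card {f : Fin m ↪ Fin n // ∀ j, R (f j) (ω (f j))}
      = ∑ f : Fin m ↪ Fin n,
        Fintype.card {ω : Equiv.Perm (Fin n) // ∀ j, R (f j) (ω (f j))} := by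
    simp only [Fintype.card_subtype]
    exact Finset.sum_card_bipartiteAbove_eq_sum_card_bipartiteBelow
      (fun (ω : Equiv.Perm (Fin n)) (f : Fin m ↪ Fin n) => ∀ j, R (f j) (ω (f j)))
  have hE : 0 < Fintype.card (Fin m ↪ Fin n) := by
    rw [Fintype.card_embedding_eq, Fintype.card_fin, Fintype.card_fin]
    exact Nat.descFactorial_pos.2 hm
  have upper : ∑ f : Fin m ↪ Fin n,
      Fintype.card {ω : Equiv.Perm (Fin n) // ∀ j, R (f j) (ω (f j))} ≤ n.factorial * c ^ m := by
    refine Nat.le_of_mul_le_mul_right ?_ hE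
    rw [Finset.sum_mul]
    refine (Finset.sum_le_sum fun f _ => card_perm_on_tuple_le R hR f).trans_eq ?_
    rw [Finset.sum_const, Finset.card_univ, smul_eq_mul, mul_comm]
  rw [← swap] at upper
  refine le_trans ?_ upper
  rw [Fintype.card_subtype, ← smul_eq_mul]
  refine (Finset.card_nsmul_le_sum _ _ _ fun ω hω => ?_).trans
    (Finset.sum_le_sum_of_subset (Finset.subset_univ _))
  rw [emb]
  exact Nat.descFactorial_le m (Finset.mem_filter.1 hω).2

/-- Fewer than `n/8` steps away from `i` on the circle there are at most `2⌊(n-1)/8⌋ + 1` points: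
moving the arc by `⌊(n-1)/8⌋ - i` places it at the start of `{0, …, n-1}`. -/
lemma card_close_le (n k : ℕ) (i : Fin n) :
    Fintype.card {y : Fin n // 8 * cdist n ((k + (y : ℕ)) % n + 1) ((i : ℕ) + 1) < n}
      ≤ 2 * ((n - 1) / 8) + 1 := by
  classical
  have hi := i.2
  have hn : 0 < n := by omega
  set q := (n - 1) / 8 with hq
  have hmap : ∀ y : {y : Fin n // 8 * cdist n ((k + (y : ℕ)) % n + 1) ((i : ℕ) + 1) < n},
      ((k + (y.1 : ℕ)) % n + (n - i + q)) % n < 2 * q + 1 := by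
    rintro ⟨y, hy⟩
    have hz := Nat.mod_lt (k + (y : ℕ)) hn
    simp only [cdist, Nat.dist] at hy ⊢
    generalize (k + (y : ℕ)) % n = z at *
    -- the shifted position lies in `[0, 3n)`, so reducing it subtracts `0`, `n` or `2n`
    rcases lt_or_ge (z + (n - i + q)) n with h | h
    · rw [Nat.mod_eq_of_lt h]; omega
    · rw [Nat.mod_eq_sub_mod h]
      rcases lt_or_ge (z + (n - i + q) - n) n with h' | h'
      · rw [Nat.mod_eq_of_lt h']; omega
      · rw [Nat.mod_eq_sub_mod h', Nat.mod_eq_of_lt (by omega)]; omega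
  calc _ ≤ Fintype.card (Fin (2 * q + 1)) :=
        Fintype.card_le_of_injective (fun y => ⟨_, hmap y⟩) (by
          rintro ⟨y, hy⟩ ⟨y', hy'⟩ h
          simp only [Fin.mk.injEq] at h
          have h1 : (k + (y : ℕ)) % n ≡ (k + (y' : ℕ)) % n [MOD n] := Nat.ModEq.add_right_cancel' _ h
          have h2 : k + (y : ℕ) ≡ k + (y' : ℕ) [MOD n] := by
            simpa [Nat.ModEq] using h1
          have h3 : (y : ℕ) ≡ (y' : ℕ) [MOD n] := Nat.ModEq.add_left_cancel' _ h2
          exact Subtype.ext (Fin.ext (Nat.ModEq.eq_of_lt_of_lt h3 y.2 y'.2)))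
    _ = _ := Fintype.card_fin _

/-- A permutation that is not very bumpy has more than `3n/4` close indices for some shift. -/
lemma exists_close_of_not_veryBumpy {n : ℕ} {ω : Equiv.Perm (Fin n)} (h : ¬ VeryBumpy n ω) :
    ∃ k : Fin n, 3 * n / 4 + 1 ≤ Fintype.card
      {i : Fin n // 8 * cdist n (((k : ℕ) + (ω i : ℕ)) % n + 1) ((i : ℕ) + 1) < n} := by
  classical
  unfold VeryBumpy at h
  push Not at h
  obtain ⟨k, hk, h⟩ := h
  refine ⟨⟨k, hk⟩, ?_⟩
  have hfar : ∀ i : Fin n,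
      (n : ℝ) / 8 ≤ (cdist n ((k + (ω i : ℕ)) % n + 1) ((i : ℕ) + 1) : ℝ) ↔
        ¬ 8 * cdist n ((k + (ω i : ℕ)) % n + 1) ((i : ℕ) + 1) < n := by
    intro i
    rw [not_lt, div_le_iff₀ (by norm_num), mul_comm, ← Nat.cast_ofNat (R := ℝ), ← Nat.cast_mul,
      Nat.cast_le]
  rw [Nat.card_congr (Equiv.subtypeEquivRight hfar), Nat.card_eq_fintype_card,
    lt_div_iff₀ (by norm_num)] at h
  have h' : Fintype.card
      {i : Fin n // ¬ 8 * cdist n ((k + (ω i : ℕ)) % n + 1) ((i : ℕ) + 1) < n} * 4 < n := by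
    exact_mod_cast h
  have hc := Fintype.card_subtype_compl
    (fun i : Fin n => 8 * cdist n ((k + (ω i : ℕ)) % n + 1) ((i : ℕ) + 1) < n)
  have hle := Fintype.card_subtype_le
    (fun i : Fin n => 8 * cdist n ((k + (ω i : ℕ)) % n + 1) ((i : ℕ) + 1) < n)
  rw [Fintype.card_fin] at hc hle
  simp only at *
  omega

lemma card_not_veryBumpy_mul_le {n : ℕ} (hn : 16 ≤ n) :
    Nat.card {ω : Equiv.Perm (Fin n) // ¬ VeryBumpy n ω} * 2 ^ (n / 8) ≤ n * n.factorial := by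
  classical
  set c := 2 * ((n - 1) / 8) + 1 with hc
  set t := 3 * n / 4 + 1 with ht
  set m := n / 8 with hm
  let B : Fin n → Finset (Equiv.Perm (Fin n)) := fun k =>
    {ω | t ≤ Fintype.card
      {i : Fin n // 8 * cdist n (((k : ℕ) + (ω i : ℕ)) % n + 1) ((i : ℕ) + 1) < n}}
  have hB : ∀ k, (B k).card * 2 ^ m ≤ n.factorial := by
    intro k
    have h := card_perm_mul_descFactorial_le
      (fun i y : Fin n => 8 * cdist n (((k : ℕ) + (y : ℕ)) % n + 1) ((i : ℕ) + 1) < n)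
      (card_close_le n k) t m (by omega)
    rw [Fintype.card_subtype] at h
    have hd : 2 ^ m * c ^ m ≤ t.descFactorial m := by
      rw [← mul_pow]
      exact (Nat.pow_le_pow_left (by omega) m).trans (Nat.pow_sub_le_descFactorial t m)
    refine Nat.le_of_mul_le_mul_right (c := c ^ m) ?_ (pow_pos (by omega) m)
    rw [mul_assoc]
    exact (Nat.mul_le_mul_left _ hd).trans h
  have hsub : (Finset.univ.filter fun ω : Equiv.Perm (Fin n) => ¬ VeryBumpy n ω)
      ⊆ Finset.univ.biUnion B := by
    intro ω hω
    obtain ⟨k, hk⟩ := exists_close_of_not_veryBumpy (Finset.mem_filter.1 hω).2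
    exact Finset.mem_biUnion.2 ⟨k, Finset.mem_univ _, Finset.mem_filter.2 ⟨Finset.mem_univ _, hk⟩⟩
  rw [Nat.card_eq_fintype_card, Fintype.card_subtype]
  calc _ ≤ (∑ k, (B k).card) * 2 ^ m :=
        Nat.mul_le_mul_right _ ((Finset.card_le_card hsub).trans Finset.card_biUnion_le)
    _ = ∑ k, (B k).card * 2 ^ m := Finset.sum_mul ..
    _ ≤ ∑ _k : Fin n, n.factorial := Finset.sum_le_sum fun k _ => hB k
    _ = n * n.factorial := by simp

lemma card_veryBumpy_add (n : ℕ) :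
    Nat.card {ω : Equiv.Perm (Fin n) // VeryBumpy n ω}
      + Nat.card {ω : Equiv.Perm (Fin n) // ¬ VeryBumpy n ω} = n.factorial := by
  classical
  rw [← Nat.card_sum, Nat.card_congr (Equiv.sumCompl fun ω => VeryBumpy n ω),
    Nat.card_eq_fintype_card, Fintype.card_perm, Fintype.card_fin]

lemma tendsto_div_two_pow :
    Filter.Tendsto (fun n : ℕ => (n : ℝ) / 2 ^ (n / 8)) Filter.atTop (nhds 0) := by
  have h1 : Filter.Tendsto (fun m : ℕ => 8 * ((m : ℝ) ^ 1 / 2 ^ m) + 8 * ((m : ℝ) ^ 0 / 2 ^ m))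
      Filter.atTop (nhds (8 * 0 + 8 * 0)) :=
    ((tendsto_pow_const_div_const_pow_of_one_lt 1 one_lt_two).const_mul 8).add
      ((tendsto_pow_const_div_const_pow_of_one_lt 0 one_lt_two).const_mul 8)
  have h2 := h1.comp (Nat.tendsto_div_const_atTop (n := 8) (by norm_num))
  rw [mul_zero, add_zero] at h2
  refine squeeze_zero (fun n => by positivity) (fun n => ?_) h2
  -- `n ≤ 8⌊n/8⌋ + 8`
  have h3 : (n : ℝ) ≤ 8 * ((n / 8 : ℕ) : ℝ) + 8 := by
    have : n ≤ 8 * (n / 8) + 8 := by omega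
    exact_mod_cast this
  simp only [Function.comp_apply, pow_one, pow_zero]
  rw [← mul_div_assoc, ← mul_div_assoc, ← add_div]
  gcongr
  linarith

/-- The proportion of very bumpy permutations in `S_n` tends to `1` as `n → ∞`. -/
theorem almost_all_very_bumpy :
    Filter.Tendsto (fun n : ℕ =>
      (Nat.card {ω : Equiv.Perm (Fin n) // VeryBumpy n ω} : ℝ) / (n.factorial : ℝ))
      Filter.atTop (nhds 1) := by
  have hlow : Filter.Tendsto (fun n : ℕ => 1 - (n : ℝ) / 2 ^ (n / 8)) Filter.atTop (nhds 1) := by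
    simpa using tendsto_div_two_pow.const_sub 1
  refine tendsto_of_tendsto_of_tendsto_of_le_of_le' hlow tendsto_const_nhds ?_ ?_
  · filter_upwards [Filter.eventually_ge_atTop 16] with n hn
    have hf : (0 : ℝ) < n.factorial := by exact_mod_cast n.factorial_pos
    have h1 : (Nat.card {ω : Equiv.Perm (Fin n) // ¬ VeryBumpy n ω} : ℝ) * 2 ^ (n / 8)
        ≤ n * n.factorial := by exact_mod_cast card_not_veryBumpy_mul_le hn
    have h2 : (Nat.card {ω : Equiv.Perm (Fin n) // VeryBumpy n ω} : ℝ)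
        + Nat.card {ω : Equiv.Perm (Fin n) // ¬ VeryBumpy n ω} = n.factorial := by
      exact_mod_cast card_veryBumpy_add n
    rw [← le_div_iff₀ (by positivity)] at h1
    rw [le_div_iff₀ hf, sub_mul, one_mul, div_mul_eq_mul_div]
    linarith
  · filter_upwards with n
    have hf : (0 : ℝ) < n.factorial := by exact_mod_cast n.factorial_pos
    rw [div_le_one hf]
    exact_mod_cast Nat.le.intro (card_veryBumpy_add n)
end

section
/- Let n be a positive integer and set p = n − ⌈n/4⌉. Then the number of permutations ω ∈ S_n that are not very bumpy is at most n · C(n, p) · ((n+4)/4)^p · (n − p)!, where C(n, p) is the binomial coefficient. -/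
/-- The permutations agreeing with `σ` on `A` are the `σ * τ` with `τ` fixing `A` pointwise, so they
inject into the permutations of the complement of `A`. -/
lemma card_perm_eqOn_le {α : Type*} [Fintype α] [DecidableEq α] (A : Finset α)
    (σ : Equiv.Perm α) :
    (Finset.univ.filter fun ω : Equiv.Perm α => ∀ i ∈ A, ω i = σ i).card ≤
      (Fintype.card α - A.card).factorial := by
  have hcard : Fintype.card (Equiv.Perm {i // i ∉ A}) = (Fintype.card α - A.card).factorial := by
    rw [Fintype.card_perm, Fintype.card_subtype_compl, Fintype.card_coe]
  rw [← hcard, Fintype.card_congr (Equiv.Perm.subtypeEquivSubtypePerm (fun i => i ∉ A)),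
    Fintype.card_subtype]
  refine Finset.card_le_card_of_injOn (fun ω => σ⁻¹ * ω) ?_ ?_
  · intro ω hω
    simp only [Finset.coe_filter, Finset.mem_univ, true_and, Set.mem_ofPred_eq, not_not] at hω ⊢
    intro i hi
    simp [hω i hi]
  · intro ω _ ω' _ h
    exact mul_left_cancel h

/-- Permutations whose values on `A` are restricted to sets of size at most `c`: at most `c ^ |A|`
restrictions to `A`, each extending in at most `(|α| - |A|)!` ways. -/
lemma card_perm_constrained_le {α : Type*} [Fintype α] [DecidableEq α] (A : Finset α)
    (T : α → Finset α) (c : ℕ) (hT : ∀ i, (T i).card ≤ c) :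
    (Finset.univ.filter fun ω : Equiv.Perm α => ∀ i ∈ A, ω i ∈ T i).card ≤
      c ^ A.card * (Fintype.card α - A.card).factorial := by
  have h1 := Finset.card_le_mul_card_image_of_maps_to
    (s := Finset.univ.filter fun ω : Equiv.Perm α => ∀ i ∈ A, ω i ∈ T i)
    (t := A.pi T) (f := fun ω i _ => ω i)
    (fun ω hω => by
      rw [Finset.mem_pi]
      exact (Finset.mem_filter.1 hω).2)
    (Fintype.card α - A.card).factorial (by
      intro g _
      rcases Finset.eq_empty_or_nonempty ((Finset.univ.filter
        fun ω : Equiv.Perm α => ∀ i ∈ A, ω i ∈ T i).filter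
          fun ω => (fun i (_ : i ∈ A) => ω i) = g) with h | ⟨σ, hσ⟩
      · rw [h]; simp
      · refine le_trans (Finset.card_le_card ?_) (card_perm_eqOn_le A σ)
        intro ω hω
        have e := (Finset.mem_filter.1 hω).2.trans (Finset.mem_filter.1 hσ).2.symm
        refine Finset.mem_filter.2 ⟨Finset.mem_univ _, fun i hi => ?_⟩
        exact congrFun (congrFun e i) hi)
  refine h1.trans ?_
  rw [mul_comm]
  refine Nat.mul_le_mul_right _ ?_
  rw [Finset.card_pi]
  exact Finset.prod_le_pow_card _ _ _ fun i _ => hT i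

/-- The values `m` for which `k + m` lies at circle distance less than `n/8` from `i`. -/
def nearSet (n k : ℕ) (i : Fin n) : Finset (Fin n) :=
  Finset.univ.filter fun m => 8 * cdist n ((k + (m : ℕ)) % n + 1) ((i : ℕ) + 1) < n

/-- With `q = ⌈n/8⌉`, a point at circle distance less than `n/8` from `i` is `i + e` modulo `n` for
an offset `e` with `|e| ≤ q - 1`, which leaves `2q - 1` possibilities. -/
lemma card_near_le (n k : ℕ) (i : Fin n) :
    (nearSet n k i).card ≤ 2 * ((n + 7) / 8) - 1 := by
  have hi := i.2
  set q := (n + 7) / 8 with hq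
  have h : (nearSet n k i).card ≤
      ((Finset.range (2 * q - 1)).image fun e => ((i : ℕ) + e + (n - (q - 1))) % n).card := by
    refine Finset.card_le_card_of_injOn (fun m => (k + (m : ℕ)) % n) ?_ ?_
    · intro m hm
      have hm' := (Finset.mem_filter.1 hm).2
      have hx : (k + (m : ℕ)) % n < n := Nat.mod_lt _ (by omega)
      simp only [Finset.coe_image, Set.mem_image, Finset.coe_range, Set.mem_Iio]
      generalize (k + (m : ℕ)) % n = x at hm' hx
      unfold cdist Nat.dist at hm'
      -- The offset `x - i` has three possible representatives of small absolute value: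
      -- itself, or itself shifted by `± n`.
      have hcases : (i.1 < x + q ∧ x < i.1 + q) ∨ (x + n < i.1 + q) ∨ (i.1 + n < x + q) := by
        omega
      rcases hcases with h | h | h
      · refine ⟨x + (q - 1) - i, by omega, ?_⟩
        have : (i : ℕ) + (x + (q - 1) - i) + (n - (q - 1)) = x + n := by omega
        rw [this, Nat.add_mod_right, Nat.mod_eq_of_lt hx]
      · refine ⟨x + n + (q - 1) - i, by omega, ?_⟩
        have : (i : ℕ) + (x + n + (q - 1) - i) + (n - (q - 1)) = x + n + n := by omega
        rw [this, Nat.add_mod_right, Nat.add_mod_right, Nat.mod_eq_of_lt hx]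
      · refine ⟨x + (q - 1) - i - n, by omega, ?_⟩
        have : (i : ℕ) + (x + (q - 1) - i - n) + (n - (q - 1)) = x := by omega
        rw [this, Nat.mod_eq_of_lt hx]
    · intro a _ b _ hab
      have h1 : (k + (a : ℕ)) ≡ k + b [MOD n] := hab
      have h2 : (a : ℕ) ≡ b [MOD n] := Nat.ModEq.add_left_cancel' k h1
      exact Fin.ext (Nat.ModEq.eq_of_lt_of_lt h2 a.2 b.2)
  exact h.trans (Finset.card_image_le.trans (by simp))

/-- A permutation that is not very bumpy has, for some rotation `k`, a set of exactly `n - ⌈n/4⌉`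
indices that it sends close to themselves up to the rotation. -/
lemma exists_near_of_not_veryBumpy (n : ℕ) (ω : Equiv.Perm (Fin n)) (h : ¬ VeryBumpy n ω) :
    ∃ k < n, ∃ A : Finset (Fin n), A.card = n - (n + 3) / 4 ∧ ∀ i ∈ A, ω i ∈ nearSet n k i := by
  unfold VeryBumpy at h
  push Not at h
  obtain ⟨k, hk, h⟩ := h
  have hfar : ∀ i : Fin n,
      (n : ℝ) / 8 ≤ (cdist n ((k + (ω i : ℕ)) % n + 1) ((i : ℕ) + 1) : ℝ) ↔ ω i ∉ nearSet n k i := by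
    intro i
    simp only [nearSet, Finset.mem_filter, Finset.mem_univ, true_and, not_lt]
    rw [div_le_iff₀ (by norm_num), mul_comm]
    exact_mod_cast Iff.rfl
  simp only [hfar] at h
  rw [Nat.card_eq_fintype_card, Fintype.card_subtype] at h
  have h4 : 4 * (Finset.univ.filter fun i => ω i ∉ nearSet n k i).card < n := by
    rw [lt_div_iff₀ (by norm_num), mul_comm] at h
    exact_mod_cast h
  have hsum := Finset.card_filter_add_card_filter_not (s := Finset.univ)
    (fun i : Fin n => ω i ∈ nearSet n k i)
  rw [Finset.card_univ, Fintype.card_fin] at hsum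
  obtain ⟨A, hA, hAc⟩ := Finset.exists_subset_card_eq
    (s := Finset.univ.filter fun i => ω i ∈ nearSet n k i) (n := n - (n + 3) / 4) (by omega)
  exact ⟨k, hk, A, hAc, fun i hi => (Finset.mem_filter.1 (hA hi)).2⟩

/-- For `p = n - ⌈n/4⌉` (in ℕ, `⌈n/4⌉ = (n + 3)/4`), the number of permutations of
`{1, …, n}` that are not very bumpy is at most `n ⬝ C(n, p) ⬝ ((n+4)/4)^p ⬝ (n-p)!`. -/
theorem count_not_very_bumpy (n : ℕ) (hn : 1 ≤ n) (p : ℕ) (hp : p = n - (n + 3) / 4) :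
    (Nat.card {ω : Equiv.Perm (Fin n) // ¬ VeryBumpy n ω} : ℝ) ≤
      (n : ℝ) * (n.choose p : ℝ) * (((n : ℝ) + 4) / 4) ^ p * ((n - p).factorial : ℝ) := by
  classical
  set c := 2 * ((n + 7) / 8) - 1 with hc
  have hc4 : (c : ℝ) ≤ ((n : ℝ) + 4) / 4 := by
    rw [le_div_iff₀ (by norm_num)]
    have : c * 4 ≤ n + 4 := by omega
    exact_mod_cast this
  have hN : Nat.card {ω : Equiv.Perm (Fin n) // ¬ VeryBumpy n ω} ≤
      n * (n.choose p) * (c ^ p * (n - p).factorial) := by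
    rw [Nat.card_eq_fintype_card, Fintype.card_subtype]
    have hsub : (Finset.univ.filter fun ω : Equiv.Perm (Fin n) => ¬ VeryBumpy n ω) ⊆
        (Finset.range n ×ˢ Finset.powersetCard p (Finset.univ : Finset (Fin n))).biUnion
          fun x => Finset.univ.filter fun ω : Equiv.Perm (Fin n) =>
            ∀ i ∈ x.2, ω i ∈ nearSet n x.1 i := by
      intro ω hω
      obtain ⟨k, hk, A, hA, hnear⟩ :=
        exists_near_of_not_veryBumpy n ω (Finset.mem_filter.1 hω).2
      refine Finset.mem_biUnion.2 ⟨(k, A), ?_, Finset.mem_filter.2 ⟨Finset.mem_univ _, hnear⟩⟩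
      simp [hk, hA, hp, Finset.mem_powersetCard]
    refine (Finset.card_le_card hsub).trans ((Finset.card_biUnion_le_card_mul _ _
      (c ^ p * (n - p).factorial) ?_).trans_eq ?_)
    · intro x hx
      have hx2 : x.2.card = p := (Finset.mem_powersetCard.1 (Finset.mem_product.1 hx).2).2
      have := card_perm_constrained_le x.2 (nearSet n x.1) c (card_near_le n x.1)
      rw [hx2, Fintype.card_fin] at this
      convert this
    · simp
  calc (Nat.card {ω : Equiv.Perm (Fin n) // ¬ VeryBumpy n ω} : ℝ)
      ≤ (n : ℝ) * (n.choose p : ℝ) * ((c : ℝ) ^ p * ((n - p).factorial : ℝ)) := by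
        exact_mod_cast hN
    _ ≤ (n : ℝ) * (n.choose p : ℝ) * ((((n : ℝ) + 4) / 4) ^ p * ((n - p).factorial : ℝ)) := by
        gcongr
    _ = _ := by ring
end
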